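/- arXiv:1209.1237 — 2 statements merged into one kernel-verified Lean document; each statement's English description precedes it below -/
import Mathlib

section
/- For a binary octavic f(X,Y) = Σ_{i=0}^{8} a_i X^i Y^{8−i} over a field k with char k ∉ {2,3,5,7}, the following explicit formulas hold: J_2 := 2^2·5·7·(f,f)^8 = 280 a_8a_0 − 35 a_7a_1 + 10 a_6a_2 − 5 a_5a_3 + 2 a_4^2, and, with g := (f,f)^4, J_3 := (1/3)·2^4·5^2·7^3·(f,g)^8 = 1050 a_8a_2^2 + 1050 a_6^2a_0 + 75 a_6a_3^2 + 75 a_5^2a_2 + 12 a_4^3 + 3920 a_8a_4a_0 − 2450 a_8a_3a_1 + 735 a_7a_4a_1 − 2450 a_7a_5a_0 − 175 a_7a_3a_2 − 110 a_6a_4a_2 − 175 a_6a_5a_1 − 45 a_5a_4a_3. -/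
noncomputable section

open MvPolynomial


variable {k : Type*} [Field k]

/-- char k not in {2,3,5,7} -/
def CharOK (k : Type*) [Field k] : Prop :=
  ringChar k ≠ 2 ∧ ringChar k ≠ 3 ∧ ringChar k ≠ 5 ∧ ringChar k ≠ 7

/-- the r-th transvectant of binary forms f, g of degrees n and m -/
def transvectant (n m r : ℕ) (f g : MvPolynomial (Fin 2) k) : MvPolynomial (Fin 2) k :=
  C ((((m - r).factorial * (n - r).factorial : ℕ) : k) /
      ((n.factorial * m.factorial : ℕ) : k)) *
    ∑ j ∈ Finset.range (r + 1),
      C ((-1 : k) ^ j * (r.choose j : k)) *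
        ((fun p => pderiv (0 : Fin 2) p)^[r - j] ((fun p => pderiv (1 : Fin 2) p)^[j] f)) *
        ((fun p => pderiv (0 : Fin 2) p)^[j] ((fun p => pderiv (1 : Fin 2) p)^[r - j] g))

/-- the binary octavic with coefficient vector a -/
def octForm (a : Fin 9 → k) : MvPolynomial (Fin 2) k :=
  ∑ i : Fin 9, C (a i) * X 0 ^ (i : ℕ) * X 1 ^ (8 - (i : ℕ))

def covg (a : Fin 9 → k) := transvectant 8 8 4 (octForm a) (octForm a)
def covk (a : Fin 9 → k) := transvectant 8 8 6 (octForm a) (octForm a)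
def covh (a : Fin 9 → k) := transvectant 4 4 2 (covk a) (covk a)
def covm (a : Fin 9 → k) := transvectant 8 4 4 (octForm a) (covk a)
def covn (a : Fin 9 → k) := transvectant 8 4 4 (octForm a) (covh a)
def covp (a : Fin 9 → k) := transvectant 8 4 4 (covg a) (covk a)
def covq (a : Fin 9 → k) := transvectant 8 4 4 (covg a) (covh a)

def J2 (a : Fin 9 → k) : k :=
  (2 ^ 2 * 5 * 7 : k) * constantCoeff (transvectant 8 8 8 (octForm a) (octForm a))
def J3 (a : Fin 9 → k) : k :=
  ((2 ^ 4 * 5 ^ 2 * 7 ^ 3 : k) / 3) * constantCoeff (transvectant 8 8 8 (octForm a) (covg a))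
def J4 (a : Fin 9 → k) : k :=
  (2 ^ 9 * 3 * 7 ^ 4 : k) * constantCoeff (transvectant 4 4 4 (covk a) (covk a))
def J5 (a : Fin 9 → k) : k :=
  (2 ^ 9 * 5 * 7 ^ 5 : k) * constantCoeff (transvectant 4 4 4 (covm a) (covk a))
def J6 (a : Fin 9 → k) : k :=
  (2 ^ 14 * 3 ^ 2 * 7 ^ 6 : k) * constantCoeff (transvectant 4 4 4 (covk a) (covh a))
def J7 (a : Fin 9 → k) : k :=
  (2 ^ 14 * 3 * 5 * 7 ^ 7 : k) * constantCoeff (transvectant 4 4 4 (covm a) (covh a))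
def J8 (a : Fin 9 → k) : k :=
  (2 ^ 17 * 3 * 5 ^ 2 * 7 ^ 9 : k) * constantCoeff (transvectant 4 4 4 (covp a) (covh a))
def J9 (a : Fin 9 → k) : k :=
  (2 ^ 19 * 3 ^ 2 * 5 * 7 ^ 9 : k) * constantCoeff (transvectant 4 4 4 (covn a) (covh a))
def J10 (a : Fin 9 → k) : k :=
  (2 ^ 22 * 3 ^ 2 * 5 ^ 2 * 7 ^ 11 : k) * constantCoeff (transvectant 4 4 4 (covq a) (covh a))

def Jinv : ℕ → (Fin 9 → k) → k
  | 2 => J2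
  | 3 => J3
  | 4 => J4
  | 5 => J5
  | 6 => J6
  | 7 => J7
  | 8 => J8
  | 9 => J9
  | 10 => J10
  | _ => fun _ => 0

/-- action of a 2x2 matrix on binary forms by substitution (X,Y) ↦ (aX+bY, cX+dY) -/
def substForm (g : Matrix (Fin 2) (Fin 2) k) (p : MvPolynomial (Fin 2) k) :
    MvPolynomial (Fin 2) k :=
  aeval (fun i : Fin 2 => C (g i 0) * X 0 + C (g i 1) * X 1) p

/-- coefficients of the transformed octavic -/
def octAct (g : Matrix (Fin 2) (Fin 2) k) (a : Fin 9 → k) : Fin 9 → k := fun i =>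
  coeff (Finsupp.single (0 : Fin 2) (i : ℕ) + Finsupp.single (1 : Fin 2) (8 - (i : ℕ)))
    (substForm g (octForm a))

/-!
Write a form of degree `n` with normalized coefficients, `f = ∑ (n choose i) α_i X^i Y^(n-i)`. Then
`∂_X f` and `∂_Y f` are `n` times the forms of degree `n - 1` with normalized coefficients `α_{i+1}`
and `α_i`, so iterated derivatives only shift `α` and multiply by a falling factorial, which the
prefactor of the transvectant cancels. Hence
`(f, g)^r = ∑ j, (-1)^j (r choose j) (∑ i, (n-r choose i) α_{i+r-j} X^i Y^(n-r-i))
  (∑ i, (m-r choose i) β_{i+j} X^i Y^(m-r-i))`,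
and in particular `(f, g)^n = ∑ j, (-1)^j (n choose j) α_{n-j} β_j` for `n = m`. For an octavic this
gives the coefficients of `(f, f)^4`, and then `J_2` and `J_3`, in terms of the
`α_i = a_i / (8 choose i)`.
-/

open Finset.HasAntidiagonal (antidiagonal mem_antidiagonal)

section BinomialForm

variable {R : Type*} [CommSemiring R]

/-- The binary form `∑ (n choose i) α_i X^i Y^(n-i)` of degree `n` with normalized coefficients
`α_0, …, α_n` in the sense of classical invariant theory. The sequence `α` is indexed by `ℕ`, so
that index shifts need no casts; only its first `n + 1` terms matter. -/
def binomialForm (n : ℕ) (α : ℕ → R) : MvPolynomial (Fin 2) R :=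
  ∑ i ∈ Finset.range (n + 1), C (n.choose i * α i) * X 0 ^ i * X 1 ^ (n - i)

theorem binomialForm_zero (α : ℕ → R) : binomialForm 0 α = C (α 0) := by
  simp [binomialForm]

theorem sum_C_mul_binomialForm {ι : Type*} (s : Finset ι) (c : ι → R) (n : ℕ) (α : ι → ℕ → R) :
    ∑ j ∈ s, C (c j) * binomialForm n (α j) = binomialForm n fun i => ∑ j ∈ s, c j * α j i := by
  simp only [binomialForm, Finset.mul_sum, map_sum, Finset.sum_mul]
  rw [Finset.sum_comm]
  refine Finset.sum_congr rfl fun i _ => Finset.sum_congr rfl fun j _ => ?_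
  simp only [map_mul]
  ring

theorem pderiv_zero_C_mul_X_pow_mul_X_pow (c : R) (i j : ℕ) :
    pderiv (0 : Fin 2) (C c * X 0 ^ i * X 1 ^ j) = C (c * i) * X 0 ^ (i - 1) * X 1 ^ j := by
  simp only [pderiv_mul, pderiv_C, pderiv_pow, pderiv_X_self, pderiv_X_of_ne one_ne_zero, map_mul,
    map_natCast]
  ring

theorem pderiv_one_C_mul_X_pow_mul_X_pow (c : R) (i j : ℕ) :
    pderiv (1 : Fin 2) (C c * X 0 ^ i * X 1 ^ j) = C (c * j) * X 0 ^ i * X 1 ^ (j - 1) := by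
  simp only [pderiv_mul, pderiv_C, pderiv_pow, pderiv_X_self, pderiv_X_of_ne zero_ne_one, map_mul,
    map_natCast]
  ring

theorem pderiv_zero_binomialForm (n : ℕ) (α : ℕ → R) :
    pderiv 0 (binomialForm n α) = n • binomialForm (n - 1) fun i => α (i + 1) := by
  cases n with
  | zero => simp [binomialForm_zero]
  | succ n =>
    simp only [binomialForm, map_sum, pderiv_zero_C_mul_X_pow_mul_X_pow, Nat.add_sub_cancel]
    rw [Finset.sum_range_succ', Finset.smul_sum]
    simp only [Nat.cast_zero, mul_zero, map_zero, zero_mul, add_zero]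
    refine Finset.sum_congr rfl fun i _ => ?_
    have hchoose : ((n + 1).choose (i + 1) * (i + 1 : ℕ) : R) = (n + 1 : ℕ) * n.choose i := by
      rw [← Nat.cast_mul, ← Nat.cast_mul, Nat.add_one_mul_choose_eq]
    rw [mul_right_comm (((n + 1).choose (i + 1) : ℕ) : R), hchoose, nsmul_eq_mul,
      Nat.add_sub_cancel, Nat.add_sub_add_right]
    simp only [map_mul, map_natCast]
    ring

theorem pderiv_one_binomialForm (n : ℕ) (α : ℕ → R) :
    pderiv 1 (binomialForm n α) = n • binomialForm (n - 1) α := by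
  cases n with
  | zero => simp [binomialForm_zero]
  | succ n =>
    simp only [binomialForm, map_sum, pderiv_one_C_mul_X_pow_mul_X_pow, Nat.add_sub_cancel]
    rw [Finset.sum_range_succ, Finset.smul_sum]
    simp only [Nat.sub_self, Nat.cast_zero, mul_zero, map_zero, zero_mul, add_zero]
    refine Finset.sum_congr rfl fun i _ => ?_
    have hchoose : ((n + 1).choose i * (n + 1 - i : ℕ) : R) = (n + 1 : ℕ) * n.choose i := by
      rw [← Nat.cast_mul, ← Nat.cast_mul, ← Nat.choose_mul_succ_eq, mul_comm]
    rw [mul_right_comm (((n + 1).choose i : ℕ) : R), hchoose, nsmul_eq_mul,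
      Nat.sub_right_comm, Nat.add_sub_cancel]
    simp only [map_mul, map_natCast]
    ring

theorem iterate_pderiv_one_binomialForm (q n : ℕ) (α : ℕ → R) :
    (fun f => pderiv 1 f)^[q] (binomialForm n α) =
      n.descFactorial q • binomialForm (n - q) α := by
  induction q with
  | zero => simp
  | succ q ih =>
    rw [Function.iterate_succ_apply', ih, map_nsmul, pderiv_one_binomialForm, smul_smul,
      Nat.descFactorial_succ, mul_comm, Nat.sub_sub]

theorem iterate_pderiv_binomialForm (p q n : ℕ) (α : ℕ → R) :
    (fun f => pderiv 0 f)^[p] ((fun f => pderiv 1 f)^[q] (binomialForm n α)) =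
      n.descFactorial (p + q) • binomialForm (n - (p + q)) fun i => α (i + p) := by
  induction p with
  | zero => simpa using iterate_pderiv_one_binomialForm q n α
  | succ p ih =>
    rw [Function.iterate_succ_apply', ih, map_nsmul, pderiv_zero_binomialForm, smul_smul,
      Nat.add_right_comm, Nat.descFactorial_succ, mul_comm, Nat.sub_sub]
    simp only [add_right_comm, add_assoc]

end BinomialForm

theorem natCast_choose_ne_zero {R : Type*} [Semiring R] {n i : ℕ} (hn : (n.factorial : R) ≠ 0)
    (hi : i ≤ n) : (n.choose i : R) ≠ 0 := by
  rw [← Nat.choose_mul_factorial_mul_factorial hi] at hn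
  push_cast at hn
  exact left_ne_zero_of_mul (left_ne_zero_of_mul hn)

theorem sum_range_mul_sum_range_eq_sum_antidiagonal {M : Type*} [AddCommMonoid M] (p q : ℕ)
    (F : ℕ → ℕ → M) (hp : ∀ i j, p < i → F i j = 0) (hq : ∀ i j, q < j → F i j = 0) :
    ∑ i ∈ Finset.range (p + 1), ∑ j ∈ Finset.range (q + 1), F i j =
      ∑ s ∈ Finset.range (p + q + 1), ∑ x ∈ antidiagonal s, F x.1 x.2 := by
  rw [← Finset.sum_product', Finset.sum_sigma']
  refine Finset.sum_bij_ne_zero (fun x _ _ => ⟨x.1 + x.2, x⟩) ?_ ?_ ?_ ?_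
  · rintro ⟨i, j⟩ hx -
    simp only [Finset.mem_product, Finset.mem_range] at hx
    exact Finset.mem_sigma.2 ⟨Finset.mem_range.2 (by dsimp only; omega), mem_antidiagonal.2 rfl⟩
  · simp
  · rintro ⟨s, i, j⟩ hx hF
    have hi : i ≤ p := not_lt.1 fun h => hF (hp i j h)
    have hj : j ≤ q := not_lt.1 fun h => hF (hq i j h)
    obtain ⟨-, rfl⟩ : _ ∧ i + j = s := by simpa using hx
    exact ⟨(i, j), Finset.mem_product.2 ⟨Finset.mem_range_succ_iff.2 hi,
      Finset.mem_range_succ_iff.2 hj⟩, hF, rfl⟩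
  · simp

/-- The normalized coefficients of the product of two binomial forms of degrees `p` and `q`
with normalized coefficients `α` and `β`; the division is only meaningful for `s ≤ p + q` and
`(p + q)! ≠ 0` in `k`. -/
def binomialConv (p q : ℕ) (α β : ℕ → k) (s : ℕ) : k :=
  (∑ x ∈ antidiagonal s, (p.choose x.1 * α x.1) * (q.choose x.2 * β x.2)) /
    (p + q).choose s

theorem binomialForm_mul (p q : ℕ) (hpq : ((p + q).factorial : k) ≠ 0) (α β : ℕ → k) :
    binomialForm p α * binomialForm q β = binomialForm (p + q) (binomialConv p q α β) := by
  have hterm : ∀ i ∈ Finset.range (p + 1), ∀ j ∈ Finset.range (q + 1),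
      (C (p.choose i * α i) * X 0 ^ i * X 1 ^ (p - i)) *
        (C (q.choose j * β j) * X 0 ^ j * X 1 ^ (q - j)) =
      (C ((p.choose i * α i) * (q.choose j * β j)) * X 0 ^ (i + j) * X 1 ^ (p + q - (i + j)) :
        MvPolynomial (Fin 2) k) := fun i hi j hj => by
    rw [Finset.mem_range_succ_iff] at hi hj
    rw [show p + q - (i + j) = (p - i) + (q - j) by omega]
    simp only [map_mul]
    ring
  rw [binomialForm, binomialForm, Finset.sum_mul_sum,
    Finset.sum_congr rfl fun i hi => Finset.sum_congr rfl (hterm i hi),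
    sum_range_mul_sum_range_eq_sum_antidiagonal p q fun i j =>
      C ((p.choose i * α i) * (q.choose j * β j)) * X 0 ^ (i + j) * X 1 ^ (p + q - (i + j))]
  · refine Finset.sum_congr rfl fun s hs => ?_
    have hchoose := natCast_choose_ne_zero hpq (Finset.mem_range_succ_iff.1 hs)
    rw [binomialConv, mul_div_cancel₀ _ hchoose, map_sum, Finset.sum_mul, Finset.sum_mul]
    exact Finset.sum_congr rfl fun x hx => by rw [mem_antidiagonal.1 hx]
  · simp +contextual [Nat.choose_eq_zero_of_lt]
  · simp +contextual [Nat.choose_eq_zero_of_lt]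

theorem transvectant_binomialForm {n m r : ℕ} (hrn : r ≤ n) (hrm : r ≤ m)
    (hn : (n.factorial : k) ≠ 0) (hm : (m.factorial : k) ≠ 0) (α β : ℕ → k) :
    transvectant n m r (binomialForm n α) (binomialForm m β) =
      ∑ j ∈ Finset.range (r + 1), C ((-1) ^ j * (r.choose j : k)) *
        (binomialForm (n - r) (fun i => α (i + (r - j))) *
          binomialForm (m - r) (fun i => β (i + j))) := by
  have hscale : ((m - r).factorial * (n - r).factorial : ℕ) / (n.factorial * m.factorial : ℕ) *
      (n.descFactorial r * m.descFactorial r : k) = 1 := by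
    have hden : ((n.factorial * m.factorial : ℕ) : k) ≠ 0 := by
      rw [Nat.cast_mul]
      exact mul_ne_zero hn hm
    rw [div_mul_eq_mul_div, div_eq_one_iff_eq hden, ← Nat.factorial_mul_descFactorial hrn,
      ← Nat.factorial_mul_descFactorial hrm]
    push_cast
    ring
  rw [transvectant, Finset.mul_sum]
  refine Finset.sum_congr rfl fun j hj => ?_
  have hj : j ≤ r := Finset.mem_range_succ_iff.1 hj
  rw [iterate_pderiv_binomialForm, iterate_pderiv_binomialForm, Nat.sub_add_cancel hj,
    Nat.add_sub_cancel' hj, nsmul_eq_mul, nsmul_eq_mul, ← map_natCast C, ← map_natCast C]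
  have hscaleC := congrArg (C : k → MvPolynomial (Fin 2) k) hscale
  simp only [map_mul, map_one] at hscaleC ⊢
  linear_combination (C ((-1) ^ j) * C (r.choose j : k) *
    binomialForm (n - r) (fun i => α (i + (r - j))) *
      binomialForm (m - r) (fun i => β (i + j))) * hscaleC

/-- The normalized coefficients of the `r`-th transvectant of two binomial forms of degrees `n` and
`m` with normalized coefficients `α` and `β`. -/
def transvectantCoeff (n m r : ℕ) (α β : ℕ → k) (s : ℕ) : k :=
  ∑ j ∈ Finset.range (r + 1), (-1) ^ j * (r.choose j : k) *
    binomialConv (n - r) (m - r) (fun i => α (i + (r - j))) (fun i => β (i + j)) s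

theorem transvectant_binomialForm_eq_binomialForm {n m r : ℕ} (hrn : r ≤ n) (hrm : r ≤ m)
    (hn : (n.factorial : k) ≠ 0) (hm : (m.factorial : k) ≠ 0)
    (hnm : ((n - r + (m - r)).factorial : k) ≠ 0) (α β : ℕ → k) :
    transvectant n m r (binomialForm n α) (binomialForm m β) =
      binomialForm (n - r + (m - r)) (transvectantCoeff n m r α β) := by
  unfold transvectantCoeff
  rw [transvectant_binomialForm hrn hrm hn hm, ← sum_C_mul_binomialForm]
  simp only [binomialForm_mul _ _ hnm]

theorem constantCoeff_transvectant_self_binomialForm {n : ℕ} (hn : (n.factorial : k) ≠ 0)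
    (α β : ℕ → k) :
    constantCoeff (transvectant n n n (binomialForm n α) (binomialForm n β)) =
      ∑ j ∈ Finset.range (n + 1), (-1) ^ j * (n.choose j : k) * (α (n - j) * β j) := by
  simp [transvectant_binomialForm le_rfl le_rfl hn hn, binomialForm_zero]

theorem CharOK.natCast_factorial_eight_ne_zero (hk : CharOK k) : (Nat.factorial 8 : k) ≠ 0 := by
  obtain ⟨h2, h3, h5, h7⟩ := hk
  have hprime {p : ℕ} (hp : p.Prime) (h : ringChar k ≠ p) : (p : k) ≠ 0 :=
    CharP.cast_ne_zero_of_ne_of_prime k hp h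
  rw [show Nat.factorial 8 = 2 ^ 7 * 3 ^ 2 * 5 * 7 by decide]
  simp only [Nat.cast_mul, Nat.cast_pow]
  exact mul_ne_zero (mul_ne_zero (mul_ne_zero (pow_ne_zero 7 (hprime Nat.prime_two h2))
    (pow_ne_zero 2 (hprime Nat.prime_three h3))) (hprime Nat.prime_five h5))
      (hprime Nat.prime_seven h7)

theorem exists_eq_choose_mul {n : ℕ} (hn : (n.factorial : k) ≠ 0) (a : Fin (n + 1) → k) :
    ∃ α : ℕ → k, a = fun i : Fin (n + 1) => (n.choose i : k) * α i :=
  ⟨fun i => a (Fin.ofNat (n + 1) i) / n.choose i, funext fun i => by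
    rw [mul_div_cancel₀ _ (natCast_choose_ne_zero hn i.is_le), Fin.ofNat_val_eq_self]⟩

theorem octForm_choose_mul (α : ℕ → k) :
    octForm (fun i => (Nat.choose 8 i : k) * α i) = binomialForm 8 α := by
  rw [octForm, binomialForm, ← Fin.sum_univ_eq_sum_range
    (fun i => C (Nat.choose 8 i * α i) * X 0 ^ i * X 1 ^ (8 - i))]

theorem J2_choose_mul (h8 : (Nat.factorial 8 : k) ≠ 0) (α : ℕ → k) :
    J2 (fun i => (Nat.choose 8 i : k) * α i) =
      280 * (α 0 * α 8 - 8 * α 1 * α 7 + 28 * α 2 * α 6 - 56 * α 3 * α 5 + 35 * α 4 ^ 2) := by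
  rw [J2, octForm_choose_mul, constantCoeff_transvectant_self_binomialForm h8]
  simp only [Finset.sum_range_succ, Finset.sum_range_zero, Nat.choose, Nat.reduceAdd, Nat.reduceSub]
  push_cast
  ring

theorem choose_mul_transvectantCoeff_eight_eight_four (h8 : (Nat.factorial 8 : k) ≠ 0)
    (α : ℕ → k) (s : Fin 9) :
    Nat.choose 8 s * transvectantCoeff 8 8 4 α α s =
      ![2 * (α 0 * α 4 - 4 * α 1 * α 3 + 3 * α 2 ^ 2),
        8 * (α 0 * α 5 - 3 * α 1 * α 4 + 2 * α 2 * α 3),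
        4 * (3 * α 0 * α 6 - 4 * α 1 * α 5 - 11 * α 2 * α 4 + 12 * α 3 ^ 2),
        8 * (α 0 * α 7 + 2 * α 1 * α 6 - 12 * α 2 * α 5 + 9 * α 3 * α 4),
        2 * (α 0 * α 8 + 12 * α 1 * α 7 - 22 * α 2 * α 6 - 36 * α 3 * α 5 + 45 * α 4 ^ 2),
        8 * (α 1 * α 8 + 2 * α 2 * α 7 - 12 * α 3 * α 6 + 9 * α 4 * α 5),
        4 * (3 * α 2 * α 8 - 4 * α 3 * α 7 - 11 * α 4 * α 6 + 12 * α 5 ^ 2),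
        8 * (α 3 * α 8 - 3 * α 4 * α 7 + 2 * α 5 * α 6),
        2 * (α 4 * α 8 - 4 * α 5 * α 7 + 3 * α 6 ^ 2)] s := by
  have hcoeff : Nat.choose 8 s * transvectantCoeff 8 8 4 α α s =
      ∑ j ∈ Finset.range 5, (-1) ^ j * (Nat.choose 4 j : k) *
        ∑ i ∈ Finset.range (s + 1), (Nat.choose 4 i * α (i + (4 - j))) *
          (Nat.choose 4 (s - i) * α (s - i + j)) := by
    have hs := natCast_choose_ne_zero h8 s.is_le
    rw [transvectantCoeff, Finset.mul_sum]
    refine Finset.sum_congr rfl fun j _ => ?_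
    rw [mul_left_comm, binomialConv, mul_div_cancel₀ _ hs,
      Finset.Nat.sum_antidiagonal_eq_sum_range_succ_mk]
  rw [hcoeff]
  fin_cases s <;>
  · simp only [Finset.sum_range_succ, Finset.sum_range_zero, Nat.choose, Nat.reduceAdd,
      Nat.reduceSub, Matrix.cons_val, Fin.reduceFinMk, Fin.zero_eta, Fin.mk_one]
    push_cast
    ring

theorem covg_choose_mul (h8 : (Nat.factorial 8 : k) ≠ 0) (α : ℕ → k) :
    covg (fun i => (Nat.choose 8 i : k) * α i) = binomialForm 8 (transvectantCoeff 8 8 4 α α) := by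
  rw [covg, octForm_choose_mul]
  exact transvectant_binomialForm_eq_binomialForm (by decide) (by decide) h8 h8 h8 α α

theorem J3_choose_mul (h8 : (Nat.factorial 8 : k) ≠ 0) (α : ℕ → k) :
    J3 (fun i => (Nat.choose 8 i : k) * α i) =
      274400 * (α 0 * α 4 * α 8 - 4 * α 0 * α 5 * α 7 + 3 * α 0 * α 6 ^ 2 - 4 * α 1 * α 3 * α 8
        + 12 * α 1 * α 4 * α 7 - 8 * α 1 * α 5 * α 6 + 3 * α 2 ^ 2 * α 8 - 8 * α 2 * α 3 * α 7
        - 22 * α 2 * α 4 * α 6 + 24 * α 2 * α 5 ^ 2 + 24 * α 3 ^ 2 * α 6 - 36 * α 3 * α 4 * α 5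
        + 15 * α 4 ^ 3) := by
  have h3 : (3 : k) ≠ 0 := fun h => h8 <| by
    rw [show Nat.factorial 8 = 3 * 13440 by decide, Nat.cast_mul, Nat.cast_ofNat, h, zero_mul]
  have hpair : constantCoeff (transvectant 8 8 8 (binomialForm 8 α)
      (binomialForm 8 (transvectantCoeff 8 8 4 α α))) =
        ∑ s : Fin 9, (-1) ^ (s : ℕ) * α (8 - s) *
          (Nat.choose 8 s * transvectantCoeff 8 8 4 α α s) := by
    rw [constantCoeff_transvectant_self_binomialForm h8, ← Fin.sum_univ_eq_sum_range
      (fun s => (-1) ^ s * (Nat.choose 8 s : k) * (α (8 - s) * transvectantCoeff 8 8 4 α α s))]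
    exact Finset.sum_congr rfl fun s _ => by ring
  rw [J3, covg_choose_mul h8, octForm_choose_mul, hpair]
  simp only [choose_mul_transvectantCoeff_eight_eight_four h8]
  simp only [Fin.sum_univ_castSucc, Fin.sum_univ_zero, Fin.reduceLast, Fin.reduceCastSucc,
    Fin.coe_ofNat_eq_mod, Nat.reduceMod, Nat.reduceSub, Matrix.cons_val]
  field_simp
  ring

/-- Explicit formulas for `J_2` and `J_3` in terms of the coefficients `a_0, ..., a_8` of a
binary octavic. -/
theorem J2_J3_explicit (k : Type*) [Field k] (hk : CharOK k) (a : Fin 9 → k) :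
    J2 a = 280 * a 8 * a 0 - 35 * a 7 * a 1 + 10 * a 6 * a 2 - 5 * a 5 * a 3 + 2 * a 4 ^ 2 ∧
    J3 a = 1050 * a 8 * a 2 ^ 2 + 1050 * a 6 ^ 2 * a 0 + 75 * a 6 * a 3 ^ 2
      + 75 * a 5 ^ 2 * a 2 + 12 * a 4 ^ 3 + 3920 * a 8 * a 4 * a 0 - 2450 * a 8 * a 3 * a 1
      + 735 * a 7 * a 4 * a 1 - 2450 * a 7 * a 5 * a 0 - 175 * a 7 * a 3 * a 2
      - 110 * a 6 * a 4 * a 2 - 175 * a 6 * a 5 * a 1 - 45 * a 5 * a 4 * a 3 := by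
  have h8 := hk.natCast_factorial_eight_ne_zero
  obtain ⟨α, rfl⟩ := exists_eq_choose_mul h8 a
  rw [J2_choose_mul h8, J3_choose_mul h8]
  simp only [Nat.choose, Fin.isValue, Fin.coe_ofNat_eq_mod, Nat.reduceMod, Nat.reduceAdd]
  push_cast
  constructor <;> ring

end
end

section
/- Let k be an algebraically closed field with char k ∉ {2,3,5,7}, and let t_1,...,t_6 ∈ k(a_0,...,a_8) be the absolute invariants of binary octavics. Then the field k(t_1,...,t_6) has transcendence degree 5 over k; more precisely, t_1, t_2, t_3, t_4, t_5 are algebraically independent over k and t_6 is algebraic of degree exactly 5 over k(t_1, t_2, t_3, t_4, t_5). -/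
noncomputable section

open MvPolynomial


variable {k : Type*} [Field k]

/-- the generic coefficient vector, in the rational function field k(a_0, ..., a_8) -/
def genA (K : Type*) [Field K] : Fin 9 → FractionRing (MvPolynomial (Fin 9) K) :=
  fun i => algebraMap (MvPolynomial (Fin 9) K) (FractionRing (MvPolynomial (Fin 9) K)) (X i)

/-- the absolute invariants t_1, ..., t_6 as elements of k(a_0, ..., a_8) -/
def T1 (K : Type*) [Field K] : FractionRing (MvPolynomial (Fin 9) K) :=
  J3 (genA K) ^ 2 / J2 (genA K) ^ 3
def T2 (K : Type*) [Field K] : FractionRing (MvPolynomial (Fin 9) K) :=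
  J4 (genA K) / J2 (genA K) ^ 2
def T3 (K : Type*) [Field K] : FractionRing (MvPolynomial (Fin 9) K) :=
  J5 (genA K) / (J2 (genA K) * J3 (genA K))
def T4 (K : Type*) [Field K] : FractionRing (MvPolynomial (Fin 9) K) :=
  J6 (genA K) / (J2 (genA K) * J4 (genA K))
def T5 (K : Type*) [Field K] : FractionRing (MvPolynomial (Fin 9) K) :=
  J7 (genA K) / (J2 (genA K) * J5 (genA K))
def T6 (K : Type*) [Field K] : FractionRing (MvPolynomial (Fin 9) K) :=
  J8 (genA K) / J2 (genA K) ^ 4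


/-!
The invariants `J₂, …, J₁₀` are nonzero multiples of invariants `Z₂, …, Z₁₀` defined over `ℤ`.
Along a suitable one-parameter family of octavics the initial terms of `Z₂, …, Z₇` are monomials
with linearly independent exponents, so `Z₂, …, Z₇` are algebraically independent. Rescaling the
octavic by `θ = Z₃ / Z₂` replaces `Zₙ` by `zₙ = Zₙ / θⁿ`, in particular `z₃ = z₂`, and leaves the
absolute invariants unchanged. Hence `k(t₁, …, t₅) = k(z₂, z₄, …, z₇)` has transcendence degree 5,
and `t₆` is a nonzero multiple of `z₈` over this field.

Syzygies of weights 16, 17, 18 and 19 express `Z₈²`, `Z₈ Z₉`, `Z₈ Z₁₀` and `Z₉ Z₁₀` as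
`ℤ[1/210, Z₂, …, Z₇]`-linear combinations of `1, Z₈, Z₉, Z₁₀, Z₉²`. They make `z₈` a root of the
characteristic polynomial of a 5 × 5 matrix over `k[z₂, z₄, …, z₇]`. At
`(z₂, z₄, z₅, z₆, z₇) = (0, 0, x, 0, 1)` this polynomial becomes `T⁵ - 5145 x² T² + 840350 x`,
which is Eisenstein at `x`, so it is irreducible and `z₈` has degree 5.

Isobaric relations between the `Zₙ` need only be checked for octavics with `a₀ = a₈ = 0` and
`a₄ = a₅ = 1`: over an algebraically closed field every octavic outside a proper closed subset is
equivalent to one of these under linear substitutions. There a relation is a polynomial over `ℤ` in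
five variables with explicitly bounded degrees and coefficients, which vanishes as soon as its
value at one suitable integer point does.
-/

/-! ### Transvectants of coefficient sequences as bilinear tables -/

/-- Bilinear map on coefficient sequences: the `l`-th row lists the triples `(c, i, j)` for which
the `l`-th output coefficient contains the term `c * a i * b j`. -/
abbrev BilinearTable := List (List (ℤ × ℕ × ℕ))

/-- The transvectant `(f, g)⁴` of two octavics up to a scalar, chosen to make the entries
coprime integers. -/
def table884 : BilinearTable :=
  [[(56,0,4), (-35,1,3), (30,2,2), (-35,3,1), (56,4,0)],
   [(280,0,5), (-84,1,4), (20,2,3), (20,3,2), (-84,4,1), (280,5,0)],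
   [(840,0,6), (-70,1,5), (-44,2,4), (60,3,3), (-44,4,2), (-70,5,1), (840,6,0)],
   [(1960,0,7), (140,1,6), (-120,2,5), (36,3,4), (36,4,3), (-120,5,2), (140,6,1), (1960,7,0)],
   [(3920,0,8), (735,1,7), (-110,2,6), (-45,3,5), (72,4,4), (-45,5,3), (-110,6,2), (735,7,1),
    (3920,8,0)],
   [(1960,1,8), (140,2,7), (-120,3,6), (36,4,5), (36,5,4), (-120,6,3), (140,7,2), (1960,8,1)],
   [(840,2,8), (-70,3,7), (-44,4,6), (60,5,5), (-44,6,4), (-70,7,3), (840,8,2)],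
   [(280,3,8), (-84,4,7), (20,5,6), (20,6,5), (-84,7,4), (280,8,3)],
   [(56,4,8), (-35,5,7), (30,6,6), (-35,7,5), (56,8,4)]]

/-- `(f, g)⁶` for two octavics, up to a scalar. -/
def table886 : BilinearTable :=
  [[(56,0,6), (-21,1,5), (12,2,4), (-10,3,3), (12,4,2), (-21,5,1), (56,6,0)],
   [(392,0,7), (-70,1,6), (18,2,5), (-4,3,4), (-4,4,3), (18,5,2), (-70,6,1), (392,7,0)],
   [(1568,0,8), (-49,1,7), (-16,2,6), (17,3,5), (-16,4,4), (17,5,3), (-16,6,2), (-49,7,1),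
    (1568,8,0)],
   [(392,1,8), (-70,2,7), (18,3,6), (-4,4,5), (-4,5,4), (18,6,3), (-70,7,2), (392,8,1)],
   [(56,2,8), (-21,3,7), (12,4,6), (-10,5,5), (12,6,4), (-21,7,3), (56,8,2)]]

/-- `(f, g)⁸` for two octavics, up to a scalar. -/
def table888 : BilinearTable :=
  [[(280,0,8), (-35,1,7), (10,2,6), (-5,3,5), (4,4,4), (-5,5,3), (10,6,2), (-35,7,1), (280,8,0)]]

/-- `(f, g)²` for two quartics, up to a scalar. -/
def table442 : BilinearTable :=
  [[(4,0,2), (-3,1,1), (4,2,0)],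
   [(12,0,3), (-2,1,2), (-2,2,1), (12,3,0)],
   [(24,0,4), (3,1,3), (-4,2,2), (3,3,1), (24,4,0)],
   [(12,1,4), (-2,2,3), (-2,3,2), (12,4,1)],
   [(4,2,4), (-3,3,3), (4,4,2)]]

/-- `(f, g)⁴` for an octavic `f` and a quartic `g`, up to a scalar. -/
def table844 : BilinearTable :=
  [[(280,0,4), (-35,1,3), (10,2,2), (-5,3,1), (4,4,0)],
   [(140,1,4), (-40,2,3), (20,3,2), (-16,4,1), (20,5,0)],
   [(60,2,4), (-30,3,3), (24,4,2), (-30,5,1), (60,6,0)],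
   [(20,3,4), (-16,4,3), (20,5,2), (-40,6,1), (140,7,0)],
   [(4,4,4), (-5,5,3), (10,6,2), (-35,7,1), (280,8,0)]]

/-- `(f, g)⁴` for two quartics, up to a scalar. -/
def table444 : BilinearTable :=
  [[(12,0,4), (-3,1,3), (2,2,2), (-3,3,1), (12,4,0)]]

section Evaluation

variable {R S : Type*} [Zero R] [One R] [Add R] [Mul R] [IntCast R]
  [Zero S] [One S] [Add S] [Mul S] [IntCast S]

/-- The common shape of all polynomial expressions evaluated below. -/
def sumOfProducts (L : List (List R)) : R := (L.map List.prod).sum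

/-- The output of the bilinear map given by `W` on the coefficient sequences `a`, `b`. -/
def bilinear (W : BilinearTable) (a b : ℕ → R) (l : ℕ) : R :=
  sumOfProducts ((W.getD l []).map fun t => [(t.1 : R), a t.2.1, b t.2.2])

/-- The covariant `g = (f, f)⁴`, up to a scalar. -/
def coeffG (a : ℕ → R) : ℕ → R := bilinear table884 a a

/-- The covariant `κ = (f, f)⁶`, up to a scalar. -/
def coeffK (a : ℕ → R) : ℕ → R := bilinear table886 a a

/-- The covariant `h = (κ, κ)²`, up to a scalar. -/
def coeffH (a : ℕ → R) : ℕ → R := bilinear table442 (coeffK a) (coeffK a)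

/-- The covariant `m = (f, κ)⁴`, up to a scalar. -/
def coeffM (a : ℕ → R) : ℕ → R := bilinear table844 a (coeffK a)

/-- The covariant `n = (f, h)⁴`, up to a scalar. -/
def coeffN (a : ℕ → R) : ℕ → R := bilinear table844 a (coeffH a)

/-- The covariant `p = (g, κ)⁴`, up to a scalar. -/
def coeffP (a : ℕ → R) : ℕ → R := bilinear table844 (coeffG a) (coeffK a)

/-- The covariant `q = (g, h)⁴`, up to a scalar. -/
def coeffQ (a : ℕ → R) : ℕ → R := bilinear table844 (coeffG a) (coeffH a)

/-- For `2 ≤ n ≤ 10`, the multiple `Z_n` of the invariant `J_n` defined over `ℤ`. Only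
multiplication, addition and integer constants are needed, so that the same formula evaluates
invariants in rings and the size of their coefficients in `Bound`. -/
def integralInvariant (a : ℕ → R) : ℕ → R
  | 2 => bilinear table888 a a 0
  | 3 => bilinear table888 a (coeffG a) 0
  | 4 => bilinear table444 (coeffK a) (coeffK a) 0
  | 5 => bilinear table444 (coeffM a) (coeffK a) 0
  | 6 => bilinear table444 (coeffK a) (coeffH a) 0
  | 7 => bilinear table444 (coeffM a) (coeffH a) 0
  | 8 => bilinear table444 (coeffP a) (coeffH a) 0
  | 9 => bilinear table444 (coeffN a) (coeffH a) 0
  | 10 => bilinear table444 (coeffQ a) (coeffH a) 0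
  | _ => 0

/-- Integer polynomial in nine variables `z 2, ..., z 10`: the entry `(c, [e₀, ..., e₈])` stands
for the term `c * z 2 ^ e₀ * ⋯ * z 10 ^ e₈`. -/
abbrev SyzygyTable := List (ℤ × List ℕ)

namespace SyzygyTable

/-- The factors of the term encoded by `t` at `z`: its coefficient, then the powers written out. -/
def termFactors (z : ℕ → R) (t : ℤ × List ℕ) : List R :=
  (t.1 : R) :: (List.range 9).flatMap fun i => List.replicate (t.2.getD i 0) (z (i + 2))

/-- The value at `z` of the polynomial encoded by `T`. -/
def eval (T : SyzygyTable) (z : ℕ → R) : R := sumOfProducts (T.map (termFactors z))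

end SyzygyTable

/-- Relations compatible with the ring operations. Applied to the graph of a ring homomorphism
and to the coefficient bounds of `Bound.Bounds`. -/
structure IsRingRelation (r : R → S → Prop) : Prop where
  zero : r 0 0
  one : r 1 1
  add {x x' : R} {y y' : S} : r x y → r x' y' → r (x + x') (y + y')
  mul {x x' : R} {y y' : S} : r x y → r x' y' → r (x * x') (y * y')
  intCast (c : ℤ) : r c c

namespace IsRingRelation

variable {r : R → S → Prop} {a b : ℕ → R} {a' b' : ℕ → S}

theorem listProd (hr : IsRingRelation r) {l : List R} {m : List S} (h : List.Forall₂ r l m) :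
    r l.prod m.prod := by
  induction h with
  | nil => exact hr.one
  | cons hxy _ ih => simpa only [List.prod_cons] using hr.mul hxy ih

theorem sumOfProducts (hr : IsRingRelation r) {L : List (List R)} {M : List (List S)}
    (h : List.Forall₂ (List.Forall₂ r) L M) : r (sumOfProducts L) (sumOfProducts M) := by
  induction h with
  | nil => exact hr.zero
  | cons hlm _ ih =>
    simpa only [_root_.sumOfProducts, List.map_cons, List.sum_cons] using
      hr.add (hr.listProd hlm) ih

theorem bilinear (hr : IsRingRelation r) (W : BilinearTable) (ha : ∀ i, r (a i) (a' i))
    (hb : ∀ i, r (b i) (b' i)) (l : ℕ) : r (bilinear W a b l) (bilinear W a' b' l) := by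
  refine hr.sumOfProducts ?_
  rw [List.forall₂_map_left_iff, List.forall₂_map_right_iff, List.forall₂_same]
  exact fun t _ => .cons (hr.intCast _) (.cons (ha _) (.cons (hb _) .nil))

theorem integralInvariant (hr : IsRingRelation r) (ha : ∀ i, r (a i) (a' i)) (n : ℕ) :
    r (integralInvariant a n) (integralInvariant a' n) := by
  have hG := hr.bilinear table884 ha ha
  have hK := hr.bilinear table886 ha ha
  have hH := hr.bilinear table442 hK hK
  match n with
  | 0 | 1 | _ + 11 => exact hr.zero
  | 2 => exact hr.bilinear _ ha ha _
  | 3 => exact hr.bilinear _ ha hG _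
  | 4 => exact hr.bilinear _ hK hK _
  | 5 => exact hr.bilinear _ (hr.bilinear _ ha hK) hK _
  | 6 => exact hr.bilinear _ hK hH _
  | 7 => exact hr.bilinear _ (hr.bilinear _ ha hK) hH _
  | 8 => exact hr.bilinear _ (hr.bilinear _ hG hK) hH _
  | 9 => exact hr.bilinear _ (hr.bilinear _ ha hH) hH _
  | 10 => exact hr.bilinear _ (hr.bilinear _ hG hH) hH _

theorem syzygyEval (hr : IsRingRelation r) (T : SyzygyTable) (ha : ∀ n, r (a n) (a' n)) :
    r (T.eval a) (T.eval a') := by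
  refine hr.sumOfProducts ?_
  rw [List.forall₂_map_left_iff, List.forall₂_map_right_iff, List.forall₂_same]
  refine fun t _ => .cons (hr.intCast _) ?_
  simp only [List.flatMap]
  refine List.rel_flatten ?_
  rw [List.forall₂_map_left_iff, List.forall₂_map_right_iff, List.forall₂_same]
  exact fun i _ => List.forall₂_iff_get.2 (by simp [ha])

end IsRingRelation

end Evaluation

section CommRing

variable {R S : Type*} [CommRing R] [CommRing S]

theorem isRingRelation_graph (f : R →+* S) : IsRingRelation fun x y => f x = y where
  zero := map_zero f
  one := map_one f
  add hx hy := by rw [map_add, hx, hy]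
  mul hx hy := by rw [map_mul, hx, hy]
  intCast := map_intCast f

theorem map_integralInvariant (f : R →+* S) (a : ℕ → R) (n : ℕ) :
    f (integralInvariant a n) = integralInvariant (fun i => f (a i)) n :=
  (isRingRelation_graph f).integralInvariant (fun _ => rfl) n

theorem map_syzygyEval (f : R →+* S) (T : SyzygyTable) (z : ℕ → R) :
    f (T.eval z) = T.eval fun n => f (z n) :=
  (isRingRelation_graph f).syzygyEval T fun _ => rfl

theorem bilinear_eq_sum (W : BilinearTable) (a b : ℕ → R) (l : ℕ) :
    bilinear W a b l = ((W.getD l []).map fun t => (t.1 : R) * (a t.2.1 * b t.2.2)).sum := by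
  simp [bilinear, sumOfProducts, Function.comp_def]

theorem SyzygyTable.eval_eq_sum (T : SyzygyTable) (z : ℕ → R) :
    T.eval z = (T.map fun t => (t.1 : R) *
      ∏ i ∈ Finset.range 9, z (i + 2) ^ t.2.getD i 0).sum := by
  simp [SyzygyTable.eval, sumOfProducts, termFactors, Function.comp_def, List.flatMap,
    Finset.prod_range_succ, List.range_succ, mul_assoc]

end CommRing

/-! ### Evaluation with intermediate results forced to numerals -/

section Strict

variable {α ι : Type}

/-- Matching on the constructor makes the kernel reduce the argument to a numeral before it
is passed on; otherwise unevaluated arguments are duplicated. -/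
def forceNat (n : ℕ) (f : ℕ → α) : α :=
  Nat.rec (motive := fun _ => α) (f 0) (fun m _ => f (m + 1)) n

/-- The analogue of `forceNat` for integers. -/
def forceInt (z : ℤ) (f : ℤ → α) : α :=
  Int.rec (motive := fun _ => α) (fun n => forceNat n fun m => f (Int.ofNat m))
    (fun n => forceNat n fun m => f (Int.negSucc m)) z

theorem forceNat_eq (n : ℕ) (f : ℕ → α) : forceNat n f = f n := by
  cases n <;> rfl

theorem forceInt_eq (z : ℤ) (f : ℤ → α) : forceInt z f = f z := by
  cases z with
  | ofNat n => exact forceNat_eq n fun m => f (Int.ofNat m)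
  | negSucc n => exact forceNat_eq n fun m => f (Int.negSucc m)

/-- `f l.prod` in continuation-passing style, every partial product being a numeral. -/
def strictProd (l : List ℤ) (f : ℤ → α) : α :=
  l.foldr (fun x g acc => forceInt (acc * x) g) f 1

/-- `f (sumOfProducts L)` in continuation-passing style, every partial sum being a numeral. -/
def strictSumOfProducts (L : List (List ℤ)) (f : ℤ → α) : α :=
  L.foldr (fun l g acc => strictProd l fun p => forceInt (acc + p) g) f 0

/-- `f (l.map g)` in continuation-passing style, where `F x` passes the numeral `g x` on. -/
def strictMap (F : ι → (ℤ → α) → α) : List ι → (List ℤ → α) → α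
  | [], f => f []
  | x :: l, f => F x fun y => strictMap F l fun m => f (y :: m)

theorem strictProd_eq (l : List ℤ) (f : ℤ → α) : strictProd l f = f l.prod := by
  suffices h : ∀ acc, l.foldr (fun x g acc => forceInt (acc * x) g) f acc = f (acc * l.prod) by
    rw [strictProd, h, one_mul]
  induction l with
  | nil => simp
  | cons x l ih => intro acc; rw [List.foldr_cons, forceInt_eq, ih, List.prod_cons, mul_assoc]

theorem strictSumOfProducts_eq (L : List (List ℤ)) (f : ℤ → α) :
    strictSumOfProducts L f = f (sumOfProducts L) := by
  suffices h : ∀ acc, L.foldr (fun l g acc => strictProd l fun p => forceInt (acc + p) g) f acc =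
      f (acc + sumOfProducts L) by
    rw [strictSumOfProducts, h, zero_add]
  induction L with
  | nil => simp [sumOfProducts]
  | cons l L ih =>
    intro acc
    rw [List.foldr_cons, strictProd_eq, forceInt_eq, ih]
    simp [sumOfProducts, add_assoc]

theorem strictMap_eq {F : ι → (ℤ → α) → α} {g : ι → ℤ} (h : ∀ x f, F x f = f (g x)) (l : List ι)
    (f : List ℤ → α) : strictMap F l f = f (l.map g) := by
  induction l generalizing f with
  | nil => rfl
  | cons x l ih => rw [strictMap, h, ih, List.map_cons]

/-- `f (bilinear W a b)` with all coefficients passed on as numerals. -/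
def strictBilinear (W : BilinearTable) (a b : ℕ → ℤ) (f : (ℕ → ℤ) → α) : α :=
  strictMap (fun row => strictSumOfProducts (row.map fun t => [t.1, a t.2.1, b t.2.2])) W
    fun l => f fun i => l.getD i 0

theorem strictBilinear_eq (W : BilinearTable) (a b : ℕ → ℤ) (f : (ℕ → ℤ) → α) :
    strictBilinear W a b f = f (bilinear W a b) := by
  let factors (row : List (ℤ × ℕ × ℕ)) : List (List ℤ) := row.map fun t => [t.1, a t.2.1, b t.2.2]
  have h : strictBilinear W a b f =
      f fun i => (W.map fun row => sumOfProducts (factors row)).getD i 0 :=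
    strictMap_eq (fun row f => strictSumOfProducts_eq (factors row) f) ..
  rw [h]
  exact congrArg f (funext fun i => List.getD_map (d := []) ..)

/-- `f (integralInvariant a)` with all intermediate covariants passed on as numerals. -/
def strictInvariant (a : ℕ → ℤ) (f : (ℕ → ℤ) → α) : α :=
  strictBilinear table884 a a fun g => strictBilinear table886 a a fun k =>
  strictBilinear table442 k k fun h => strictBilinear table844 a k fun m =>
  strictBilinear table844 a h fun n => strictBilinear table844 g k fun p =>
  strictBilinear table844 g h fun q =>
  strictBilinear table888 a a fun j2 => strictBilinear table888 a g fun j3 =>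
  strictBilinear table444 k k fun j4 => strictBilinear table444 m k fun j5 =>
  strictBilinear table444 k h fun j6 => strictBilinear table444 m h fun j7 =>
  strictBilinear table444 p h fun j8 => strictBilinear table444 n h fun j9 =>
  strictBilinear table444 q h fun j10 =>
  f fun i => [0, 0, j2 0, j3 0, j4 0, j5 0, j6 0, j7 0, j8 0, j9 0, j10 0].getD i 0

theorem strictInvariant_eq (a : ℕ → ℤ) (f : (ℕ → ℤ) → α) :
    strictInvariant a f = f (integralInvariant a) := by
  simp only [strictInvariant, strictBilinear_eq]
  refine congrArg f (funext fun n => ?_)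
  match n with
  | 0 | 1 | 2 | 3 | 4 | 5 | 6 | 7 | 8 | 9 | 10 | _ + 11 => rfl

end Strict

/-- Decides whether `T` is a relation between the integral invariants of the octavic with
coefficients `a`. -/
def SyzygyTable.vanishesAt (T : SyzygyTable) (a : List ℤ) : Bool :=
  strictMap forceInt a fun l => strictInvariant (fun i => l.getD i 0) fun z =>
    strictSumOfProducts (T.map (termFactors z)) fun s => decide (s = 0)

theorem SyzygyTable.eval_eq_zero_of_vanishesAt {T : SyzygyTable} {a : List ℤ}
    (h : T.vanishesAt a = true) : T.eval (integralInvariant fun i => a.getD i 0) = 0 := by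
  simpa only [SyzygyTable.eval, vanishesAt, strictMap_eq (g := id) forceInt_eq, List.map_id,
    strictInvariant_eq, strictSumOfProducts_eq, decide_eq_true_eq] using h

/-! ### Testing integer polynomials for zero by Kronecker substitution -/

/-- Bounds on the size of an integer polynomial: on the sum of the absolute values of its
coefficients and on its degree in each variable. -/
structure Bound (σ : Type*) where
  coeffSum : ℕ
  degree : σ → ℕ

namespace Bound

variable {σ : Type*}

instance : Zero (Bound σ) := ⟨⟨0, 0⟩⟩
instance : One (Bound σ) := ⟨⟨1, 0⟩⟩
instance : Add (Bound σ) := ⟨fun A B => ⟨A.coeffSum + B.coeffSum, A.degree ⊔ B.degree⟩⟩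
instance : Mul (Bound σ) := ⟨fun A B => ⟨A.coeffSum * B.coeffSum, A.degree + B.degree⟩⟩
instance : IntCast (Bound σ) := ⟨fun c => ⟨c.natAbs, 0⟩⟩
instance : LE (Bound σ) := ⟨fun A B => A.coeffSum ≤ B.coeffSum ∧ ∀ i, A.degree i ≤ B.degree i⟩
instance [Fintype σ] : DecidableLE (Bound σ) := fun _ _ => instDecidableAnd

/-- `B.Bounds P` holds if some polynomial dominating `P` coefficientwise obeys the bound `B`. -/
def Bounds (B : Bound σ) (P : MvPolynomial σ ℤ) : Prop :=
  ∃ Q : MvPolynomial σ ℕ, (∀ m, (coeff m P).natAbs ≤ coeff m Q) ∧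
    eval 1 Q ≤ B.coeffSum ∧ ∀ i, degreeOf i Q ≤ B.degree i

theorem bounds_intCast (c : ℤ) : (c : Bound σ).Bounds c := by
  classical
  refine ⟨C c.natAbs, fun m => ?_, (eval_C _).le, fun i => (degreeOf_C _ i).le⟩
  rw [← eq_intCast (C : ℤ →+* MvPolynomial σ ℤ), coeff_C, coeff_C]
  split <;> simp

theorem bounds_X [DecidableEq σ] (j : σ) : (⟨1, Pi.single j 1⟩ : Bound σ).Bounds (X j) := by
  refine ⟨X j, fun m => ?_, (eval_X (f := 1) j).le, fun i => ?_⟩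
  · rw [coeff_X, coeff_X]
    split <;> simp
  · exact (degreeOf_X i j).trans_le (Pi.single_apply j 1 i).ge

theorem isRingRelation_bounds : IsRingRelation (Bounds (σ := σ)) where
  zero := Int.cast_zero (R := MvPolynomial σ ℤ) ▸ bounds_intCast 0
  one := Int.cast_one (R := MvPolynomial σ ℤ) ▸ bounds_intCast 1
  add := by
    rintro A B P P' ⟨Q, hcoeff, hsum, hdeg⟩ ⟨Q', hcoeff', hsum', hdeg'⟩
    refine ⟨Q + Q', fun m => ?_, ?_, fun i => ?_⟩
    · rw [coeff_add, coeff_add]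
      exact (Int.natAbs_add_le _ _).trans (add_le_add (hcoeff m) (hcoeff' m))
    · rw [map_add]
      exact add_le_add hsum hsum'
    · exact (degreeOf_add_le _ _ _).trans (max_le_max (hdeg i) (hdeg' i))
  mul := by
    rintro A B P P' ⟨Q, hcoeff, hsum, hdeg⟩ ⟨Q', hcoeff', hsum', hdeg'⟩
    refine ⟨Q * Q', fun m => ?_, ?_, fun i => ?_⟩
    · classical
      rw [coeff_mul, coeff_mul]
      refine (Int.natAbs_sum_le _ _).trans (Finset.sum_le_sum fun x _ => ?_)
      rw [Int.natAbs_mul]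
      exact Nat.mul_le_mul (hcoeff _) (hcoeff' _)
    · rw [map_mul]
      exact Nat.mul_le_mul hsum hsum'
    · exact (degreeOf_mul_le _ _ _).trans (add_le_add (hdeg i) (hdeg' i))
  intCast := bounds_intCast

variable {A B : Bound σ} {P : MvPolynomial σ ℤ}

theorem Bounds.mono (h : A.Bounds P) (hAB : A ≤ B) : B.Bounds P := by
  obtain ⟨Q, hcoeff, hsum, hdeg⟩ := h
  exact ⟨Q, hcoeff, hsum.trans hAB.1, fun i => (hdeg i).trans (hAB.2 i)⟩

theorem Bounds.natAbs_coeff_le (h : B.Bounds P) (m : σ →₀ ℕ) :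
    (coeff m P).natAbs ≤ B.coeffSum := by
  obtain ⟨Q, hcoeff, hsum, -⟩ := h
  refine (hcoeff m).trans (le_trans ?_ hsum)
  rw [eval_eq]
  by_cases hm : m ∈ Q.support
  · simpa using Finset.single_le_sum (f := fun m => coeff m Q) (fun _ _ => Nat.zero_le _) hm
  · simp [notMem_support_iff.1 hm]

theorem Bounds.apply_le (h : B.Bounds P) {m : σ →₀ ℕ} (hm : m ∈ P.support) (i : σ) :
    m i ≤ B.degree i := by
  obtain ⟨Q, hcoeff, -, hdeg⟩ := h
  have hmQ : m ∈ Q.support := by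
    rw [mem_support_iff] at hm ⊢
    have := hcoeff m
    have := Int.natAbs_ne_zero.2 hm
    lia
  exact (monomial_le_degreeOf i hmQ).trans (hdeg i)

end Bound

theorem eq_zero_of_sum_mul_pow_eq_zero {ι : Type*} {s : Finset ι} {c : ι → ℤ} {e : ι → ℕ} {b : ℕ}
    (he : Set.InjOn e s) (hc : ∀ i ∈ s, (c i).natAbs < b) (h : ∑ i ∈ s, c i * (b : ℤ) ^ e i = 0) :
    ∀ i ∈ s, c i = 0 := by
  classical
  induction s using Finset.strongInduction with
  | H s ih =>
    rcases s.eq_empty_or_nonempty with rfl | hs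
    · simp
    obtain ⟨i, hi, hmin⟩ := s.exists_min_image e hs
    have hdvd : (b : ℤ) ^ (e i + 1) ∣ ∑ j ∈ s.erase i, c j * (b : ℤ) ^ e j := by
      refine Finset.dvd_sum fun j hj => Dvd.dvd.mul_left (pow_dvd_pow _ ?_) _
      obtain ⟨hji, hj⟩ := Finset.mem_erase.1 hj
      exact (hmin j hj).lt_of_ne fun hij => hji (he hj hi hij.symm)
    rw [← Finset.add_sum_erase _ _ hi] at h
    have hb : (b : ℤ) ≠ 0 := by exact_mod_cast (Nat.zero_le _ |>.trans_lt (hc i hi)).ne'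
    have hci : c i = 0 := by
      rw [← dvd_neg, ← eq_neg_of_add_eq_zero_left h, pow_succ',
        mul_dvd_mul_iff_right (pow_ne_zero _ hb)] at hdvd
      exact Int.eq_zero_of_dvd_of_natAbs_lt_natAbs hdvd (by simpa using hc i hi)
    rw [hci, zero_mul, zero_add] at h
    have hrest := ih _ (Finset.erase_ssubset hi) (he.mono (by simp))
      (fun j hj => hc j (Finset.mem_of_mem_erase hj)) h
    intro j hj
    by_cases hji : j = i
    · rwa [hji]
    · exact hrest j (Finset.mem_erase.2 ⟨hji, hj⟩)

/-- The `i`-th place value in the mixed radix system with digits `d j ≤ r j`. -/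
def placeValue {n : ℕ} (r : Fin n → ℕ) (i : Fin n) : ℕ :=
  ∏ j : Fin i, (r (Fin.castLE i.isLt.le j) + 1)

theorem injOn_sum_mul_placeValue {n : ℕ} (r : Fin n → ℕ) :
    Set.InjOn (fun m : Fin n → ℕ => ∑ i, m i * placeValue r i) (Set.Iic r) := by
  intro m hm m' hm' h
  let digits (d : Fin n → ℕ) (hd : d ≤ r) (i : Fin n) : Fin (r i + 1) :=
    ⟨d i, Nat.lt_succ_of_le (hd i)⟩
  have : digits m hm = digits m' hm' := finPiFinEquiv.injective (Fin.ext h)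
  exact funext fun i => congrArg Fin.val (congrFun this i)

theorem Bound.Bounds.eq_zero_of_eval_eq_zero {n : ℕ} {B : Bound (Fin n)}
    {P : MvPolynomial (Fin n) ℤ} (h : B.Bounds P) {b : ℕ} (hb : B.coeffSum < b)
    (hP : eval (fun i => ((b ^ placeValue B.degree i : ℕ) : ℤ)) P = 0) : P = 0 := by
  have hinj : Set.InjOn (fun m : Fin n →₀ ℕ => ∑ i, m i * placeValue B.degree i) P.support :=
    fun m hm m' hm' e => DFunLike.coe_injective
      (injOn_sum_mul_placeValue _ (h.apply_le hm) (h.apply_le hm') e)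
  have hcoeff := eq_zero_of_sum_mul_pow_eq_zero hinj
    (fun m _ => (h.natAbs_coeff_le m).trans_lt hb) (by
      rw [eval_eq'] at hP
      simpa only [Nat.cast_pow, ← pow_mul, Finset.prod_pow_eq_pow_sum, mul_comm] using hP)
  by_contra hne
  obtain ⟨m, hm⟩ := ne_zero_iff.1 hne
  exact hm (hcoeff m (mem_support_iff.2 hm))

/-! ### The syzygies on a slice -/

section Slice

/-- The octavics with `a₀ = a₈ = 0` and `a₄ = a₅ = 1`: over an algebraically closed field a general
octavic has such a representative modulo scalars and linear substitutions. -/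
def slice {R : Type*} [Zero R] [One R] (x : Fin 5 → R) : List R :=
  [0, x 0, x 1, x 2, 1, 1, x 3, x 4, 0]

theorem IsRingRelation.getD_slice {R S : Type*} [Zero R] [One R] [Add R] [Mul R] [IntCast R]
    [Zero S] [One S] [Add S] [Mul S] [IntCast S] {r : R → S → Prop} (hr : IsRingRelation r)
    {x : Fin 5 → R} {y : Fin 5 → S} (h : ∀ i, r (x i) (y i)) (i : ℕ) :
    r ((slice x).getD i 0) ((slice y).getD i 0) := by
  match i with
  | 0 | 8 | _ + 9 => exact hr.zero
  | 4 | 5 => exact hr.one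
  | 1 | 2 | 3 | 6 | 7 => exact h _

theorem map_syzygyEval_slice {R S : Type*} [CommRing R] [CommRing S] (f : R →+* S)
    (T : SyzygyTable) (x : Fin 5 → R) :
    f (T.eval (integralInvariant fun i => (slice x).getD i 0)) =
      T.eval (integralInvariant fun i => (slice fun j => f (x j)).getD i 0) :=
  have hr := isRingRelation_graph f
  hr.syzygyEval T (hr.integralInvariant (hr.getD_slice fun _ => rfl))

/-- The size of `T`, evaluated at the integral invariants on the slice, as a polynomial in the five
free coefficients. -/
def SyzygyTable.sliceBound (T : SyzygyTable) : Bound (Fin 5) :=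
  T.eval (integralInvariant fun i =>
    (slice fun j => ⟨1, Pi.single j 1⟩ : List (Bound (Fin 5))).getD i 0)

theorem SyzygyTable.eval_slice_eq_zero {T : SyzygyTable} {b : ℕ} {B : Bound (Fin 5)}
    (hB : T.sliceBound ≤ B) (hb : B.coeffSum < b)
    (h : T.vanishesAt (slice fun i => ((b ^ placeValue B.degree i : ℕ) : ℤ)) = true)
    {R : Type*} [CommRing R] (x : Fin 5 → R) :
    T.eval (integralInvariant fun i => (slice x).getD i 0) = 0 := by
  have hbounds : B.Bounds (T.eval (integralInvariant fun i =>
      (slice (X : Fin 5 → MvPolynomial (Fin 5) ℤ)).getD i 0)) :=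
    have hr := Bound.isRingRelation_bounds
    (hr.syzygyEval T (hr.integralInvariant (hr.getD_slice Bound.bounds_X))).mono hB
  have hzero := hbounds.eq_zero_of_eval_eq_zero hb <| by
    simpa only [map_syzygyEval_slice, eval_X] using SyzygyTable.eval_eq_zero_of_vanishesAt h
  simpa only [map_syzygyEval_slice, map_zero, coe_eval₂Hom, eval₂_X] using
    congrArg (eval₂Hom (Int.castRingHom R) x) hzero

/-- The relation of weight 16 between the integral invariants, cleared of denominators. -/
def syzygy16 : SyzygyTable :=
  [(-5292000, [0,0,0,2,1,0,0,0,0]), (6160000, [0,0,1,0,2,0,0,0,0]), (7938000, [0,0,1,1,0,1,0,0,0]),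
   (-38880000, [0,0,4,0,0,0,0,0,0]), (-1058400, [0,1,0,0,1,1,0,0,0]),
   (4233600, [0,1,2,1,0,0,0,0,0]), (1397760, [0,2,1,0,1,0,0,0,0]), (-3704400, [1,0,0,0,0,2,0,0,0]),
   (297920000, [1,0,2,0,1,0,0,0,0]), (-8429568, [1,2,2,0,0,0,0,0,0]),
   (-1843968000, [2,0,3,0,0,0,0,0,0]), (-2556968960, [3,0,1,0,1,0,0,0,0]),
   (15420489728, [4,0,2,0,0,0,0,0,0]), (-1404000, [0,0,2,0,0,0,1,0,0]),
   (1058400, [1,0,0,0,1,0,1,0,0]), (-330750, [0,0,0,0,0,1,0,1,0]), (529200, [0,1,1,0,0,0,0,1,0]),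
   (3704400, [1,0,0,1,0,0,0,1,0]), (84000, [0,0,0,0,1,0,0,0,1]), (-4032, [0,2,0,0,0,0,0,0,1]),
   (-1411200, [1,0,1,0,0,0,0,0,1]), (7375872, [3,0,0,0,0,0,0,0,1]), (2025, [0,0,0,0,0,0,2,0,0])]

/-- The relation of weight 17. -/
def syzygy17 : SyzygyTable :=
  [(280000, [0,0,0,1,2,0,0,0,0]), (-510000, [0,0,1,0,1,1,0,0,0]), (75600, [0,1,0,0,0,2,0,0,0]),
   (80000, [0,1,2,0,1,0,0,0,0]), (107520, [0,2,0,1,1,0,0,0,0]), (-161280, [0,2,1,0,0,1,0,0,0]),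
   (86016, [0,3,2,0,0,0,0,0,0]), (10416000, [1,0,1,1,1,0,0,0,0]), (-9072000, [1,0,2,0,0,1,0,0,0]),
   (18816000, [1,1,3,0,0,0,0,0,0]), (19756800, [2,0,0,0,1,1,0,0,0]),
   (-79027200, [2,0,2,1,0,0,0,0,0]), (-196689920, [3,0,0,1,1,0,0,0,0]),
   (295034880, [3,0,1,0,0,1,0,0,0]), (-157351936, [3,1,2,0,0,0,0,0,0]),
   (-10800, [0,1,0,0,1,0,1,0,0]), (-75600, [1,0,0,0,0,1,1,0,0]), (180000, [0,0,2,0,0,0,0,1,0]),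
   (-75600, [0,1,0,1,0,0,0,1,0]), (-1568000, [1,0,0,0,1,0,0,1,0]), (75264, [1,2,0,0,0,0,0,1,0]),
   (6585600, [2,0,1,0,0,0,0,1,0]), (-137682944, [4,0,0,0,0,0,0,1,0]), (-3375, [0,0,0,0,0,1,0,0,1]),
   (5400, [0,1,1,0,0,0,0,0,1]), (37800, [1,0,0,1,0,0,0,0,1]), (6750, [0,0,0,0,0,0,1,1,0])]

/-- The relation of weight 18. -/
def syzygy18 : SyzygyTable :=
  [(3062500000, [0,0,0,0,3,0,0,0,0]), (-2381400000, [0,0,0,1,1,1,0,0,0]),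
   (-29160000000, [0,0,3,0,1,0,0,0,0]), (-3674160000, [0,1,1,1,1,0,0,0,0]),
   (7348320000, [0,1,2,0,0,1,0,0,0]), (12936000, [0,2,0,0,2,0,0,0,0]),
   (-4898880000, [0,2,3,0,0,0,0,0,0]), (28901376, [0,4,0,0,1,0,0,0,0]),
   (999600000, [1,0,1,0,2,0,0,0,0]), (-1028764800000, [1,0,4,0,0,0,0,0,0]),
   (2667168000, [1,1,0,0,1,1,0,0,0]), (-10668672000, [1,1,2,1,0,0,0,0,0]),
   (16437657600, [1,2,1,0,1,0,0,0,0]), (18670176000, [2,0,0,0,0,2,0,0,0]),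
   (2232518400000, [2,0,2,0,1,0,0,0,0]), (21242511360, [2,2,2,0,0,0,0,0,0]),
   (-23664256000, [3,0,0,0,2,0,0,0,0]), (13608483840000, [3,0,3,0,0,0,0,0,0]),
   (-105740500992, [3,2,0,0,1,0,0,0,0]), (-30069954969600, [4,0,1,0,1,0,0,0,0]),
   (-38859634114560, [5,0,2,0,0,0,0,0,0]), (96717311574016, [6,0,0,0,1,0,0,0,0]),
   (635850000, [0,0,1,0,1,0,1,0,0]), (-10206000, [0,1,0,0,0,1,1,0,0]),
   (-21772800, [0,2,1,0,0,0,1,0,0]), (-8573040000, [1,0,2,0,0,0,1,0,0]),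
   (-2667168000, [2,0,0,0,1,0,1,0,0]), (39829708800, [3,0,1,0,0,0,1,0,0]),
   (3572100000, [0,0,1,1,0,0,0,1,0]), (-449820000, [0,1,0,0,1,0,0,1,0]),
   (10160640, [0,3,0,0,0,0,0,1,0]), (889056000, [1,1,1,0,0,0,0,1,0]),
   (-18670176000, [2,0,0,1,0,0,0,1,0]), (-18587197440, [3,1,0,0,0,0,0,1,0]),
   (-328050000, [0,0,2,0,0,0,0,0,1]), (5103000, [0,1,0,1,0,0,0,0,1]),
   (238140000, [1,0,0,0,1,0,0,0,1]), (1333584000, [2,0,1,0,0,0,0,0,1]),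
   (-148837500, [0,0,0,0,0,0,0,2,0]), (455625, [0,0,0,0,0,0,1,0,1])]

/-- The relation of weight 19. -/
def syzygy19 : SyzygyTable :=
  [(-2734375, [0,0,0,0,2,1,0,0,0]), (2126250, [0,0,0,1,0,2,0,0,0]),
   (24300000, [0,0,2,1,1,0,0,0,0]), (-18225000, [0,0,3,0,0,1,0,0,0]),
   (3024000, [0,1,0,2,1,0,0,0,0]), (415000, [0,1,1,0,2,0,0,0,0]), (-4536000, [0,1,1,1,0,1,0,0,0]),
   (-9720000, [0,1,4,0,0,0,0,0,0]), (537600, [0,2,0,0,1,1,0,0,0]), (2419200, [0,2,2,1,0,0,0,0,0]),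
   (-860160, [0,3,1,0,1,0,0,0,0]), (5145000, [1,0,0,1,2,0,0,0,0]),
   (-28140000, [1,0,1,0,1,1,0,0,0]), (1020600000, [1,0,3,1,0,0,0,0,0]),
   (-2116800, [1,1,0,0,0,2,0,0,0]), (-190400000, [1,1,2,0,1,0,0,0,0]),
   (-9031680, [1,2,0,1,1,0,0,0,0]), (4515840, [1,2,1,0,0,1,0,0,0]),
   (-2408448, [1,3,2,0,0,0,0,0,0]), (-818496000, [2,0,1,1,1,0,0,0,0]),
   (-1326528000, [2,0,2,0,0,1,0,0,0]), (-526848000, [2,1,3,0,0,0,0,0,0]),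
   (-1536640000, [3,0,0,0,1,1,0,0,0]), (-2212761600, [3,0,2,1,0,0,0,0,0]),
   (1573519360, [3,1,1,0,1,0,0,0,0]), (16521953280, [4,0,0,1,1,0,0,0,0]),
   (-8260976640, [4,0,1,0,0,1,0,0,0]), (4405854208, [4,1,2,0,0,0,0,0,0]),
   (-33750, [0,0,0,1,1,0,1,0,0]), (-506250, [0,0,1,0,0,1,1,0,0]), (864000, [0,1,2,0,0,0,1,0,0]),
   (4536000, [1,0,1,1,0,0,1,0,0]), (302400, [1,1,0,0,1,0,1,0,0]), (2116800, [2,0,0,0,0,1,1,0,0]),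
   (-2126250, [0,0,0,2,0,0,0,1,0]), (2475000, [0,0,1,0,1,0,0,1,0]), (189000, [0,1,0,0,0,1,0,1,0]),
   (-302400, [0,2,1,0,0,0,0,1,0]), (8820000, [1,0,2,0,0,0,0,1,0]), (2116800, [1,1,0,1,0,0,0,1,0]),
   (142688000, [2,0,0,0,1,0,0,1,0]), (-2107392, [2,2,0,0,0,0,0,1,0]),
   (368793600, [3,0,1,0,0,0,0,1,0]), (3855122432, [5,0,0,0,0,0,0,1,0]),
   (-54000, [0,1,0,0,1,0,0,0,1]), (-283500, [1,0,0,0,0,1,0,0,1]), (-151200, [1,1,1,0,0,0,0,0,1]),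
   (-1058400, [2,0,0,1,0,0,0,0,1]), (33750, [0,0,0,0,0,0,0,1,1])]

section Syzygies

variable {R : Type*} [CommRing R] (x : Fin 5 → R)

theorem syzygy16_slice : syzygy16.eval (integralInvariant fun i => (slice x).getD i 0) = 0 :=
  SyzygyTable.eval_slice_eq_zero (B := ⟨2 ^ 108 - 1, ![9, 10, 12, 10, 9]⟩) (b := 2 ^ 108)
    (by decide +kernel) (by decide) (by decide +kernel) x

theorem syzygy17_slice : syzygy17.eval (integralInvariant fun i => (slice x).getD i 0) = 0 :=
  SyzygyTable.eval_slice_eq_zero (B := ⟨2 ^ 110 - 1, ![9, 10, 12, 10, 9]⟩) (b := 2 ^ 110)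
    (by decide +kernel) (by decide) (by decide +kernel) x

theorem syzygy18_slice : syzygy18.eval (integralInvariant fun i => (slice x).getD i 0) = 0 :=
  SyzygyTable.eval_slice_eq_zero (B := ⟨2 ^ 128 - 1, ![10, 11, 13, 11, 10]⟩) (b := 2 ^ 128)
    (by decide +kernel) (by decide) (by decide +kernel) x

theorem syzygy19_slice : syzygy19.eval (integralInvariant fun i => (slice x).getD i 0) = 0 :=
  SyzygyTable.eval_slice_eq_zero (B := ⟨2 ^ 124 - 1, ![10, 11, 14, 11, 10]⟩) (b := 2 ^ 124)
    (by decide +kernel) (by decide) (by decide +kernel) x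

end Syzygies

end Slice

/-! ### The Ω-operator on binary forms -/

section BinaryForm

variable {R : Type*} [CommRing R]

/-- The binary form `a₀ Yⁿ + a₁ X Yⁿ⁻¹ + ⋯ + aₙ Xⁿ`. -/
def binaryForm (n : ℕ) (a : ℕ → R) : MvPolynomial (Fin 2) R :=
  ∑ i ∈ Finset.range (n + 1), C (a i) * (X 0 ^ i * X 1 ^ (n - i))

/-- The diagonal restriction of the `r`-th power of Cayley's operator
`∂²/∂X₁∂Y₂ - ∂²/∂Y₁∂X₂` applied to `f(X₁, Y₁) g(X₂, Y₂)`; up to a constant it is the `r`-th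
transvectant. -/
def omega : ℕ → MvPolynomial (Fin 2) R →ₗ[R] MvPolynomial (Fin 2) R →ₗ[R] MvPolynomial (Fin 2) R
  | 0 => LinearMap.mul R _
  | r + 1 => (omega r).compl₁₂ (pderiv 0).toLinearMap (pderiv 1).toLinearMap -
      (omega r).compl₁₂ (pderiv 1).toLinearMap (pderiv 0).toLinearMap

theorem omega_succ (r : ℕ) (f g : MvPolynomial (Fin 2) R) :
    omega (r + 1) f g =
      omega r (pderiv 0 f) (pderiv 1 g) - omega r (pderiv 1 f) (pderiv 0 g) := rfl

/-- The coefficient of the monomial `omega r (Xⁱ Yʲ) (Xᵏ Yˡ)`. The falling factorials vanish as soon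
as one of the truncated subtractions takes effect. -/
def omegaCoeff : ℕ → ℕ → ℕ → ℕ → ℕ → ℤ
  | 0, _, _, _, _ => 1
  | r + 1, i, j, k, l =>
    i * l * omegaCoeff r (i - 1) j k (l - 1) - j * k * omegaCoeff r i (j - 1) (k - 1) l

theorem pderiv_zero_monomial (i j : ℕ) : pderiv 0 (X 0 ^ i * X 1 ^ j : MvPolynomial (Fin 2) R) =
    (i : R) • (X 0 ^ (i - 1) * X 1 ^ j) := by
  simp only [Fin.isValue, Derivation.leibniz, Derivation.leibniz_pow, pderiv_X, ne_eq, one_ne_zero,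
    not_false_eq_true, Pi.single_eq_of_ne, smul_eq_mul, mul_zero, Pi.single_eq_same,
    mul_one, Algebra.smul_def, eq_natCast, zero_add, algebraMap_eq, map_natCast]
  ring

theorem pderiv_one_monomial (i j : ℕ) : pderiv 1 (X 0 ^ i * X 1 ^ j : MvPolynomial (Fin 2) R) =
    (j : R) • (X 0 ^ i * X 1 ^ (j - 1)) := by
  simp only [Fin.isValue, Derivation.leibniz, Derivation.leibniz_pow, pderiv_X, Pi.single_eq_same,
    smul_eq_mul, mul_one, Algebra.smul_def, eq_natCast, ne_eq, zero_ne_one, not_false_eq_true,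
    Pi.single_eq_of_ne, mul_zero, add_zero, algebraMap_eq, map_natCast]
  ring

theorem omega_monomial (r i j k l : ℕ) :
    omega r (X 0 ^ i * X 1 ^ j : MvPolynomial (Fin 2) R) (X 0 ^ k * X 1 ^ l) =
      (omegaCoeff r i j k l : R) • (X 0 ^ (i + k - r) * X 1 ^ (j + l - r)) := by
  induction r generalizing i j k l with
  | zero =>
    simp only [omega, LinearMap.mul_apply', omegaCoeff, Int.cast_one, one_smul, Nat.sub_zero]
    ring
  | succ r ih =>
    simp only [omega_succ, pderiv_zero_monomial, pderiv_one_monomial, map_smul,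
      LinearMap.smul_apply, ih, smul_smul, omegaCoeff]
    rcases i with _ | i <;> rcases j with _ | j <;> rcases k with _ | k <;> rcases l with _ | l <;>
      simp [sub_smul, add_right_comm _ 1, ← add_assoc, Nat.add_sub_add_right] <;> ring_nf

/-- The coefficient of `a i * b k` in the `l`-th output of a bilinear map. -/
def BilinearTable.entry (W : BilinearTable) (l i k : ℕ) : ℤ :=
  ((W.getD l []).map fun t => if t.2 = (i, k) then t.1 else 0).sum

/-- `W.IsOmegaTable n m r c` says that `c` times the bilinear map `W` is `omega r` on forms of
degrees `n` and `m`. The tables are primitive: the content `c` of `omega r` is divided out. -/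
def BilinearTable.IsOmegaTable (W : BilinearTable) (n m r : ℕ) (c : ℤ) : Prop :=
  c ≠ 0 ∧ (∀ row ∈ W, ∀ t ∈ row, t.2.1 < n + 1 ∧ t.2.2 < m + 1) ∧
  ∀ i < n + 1, ∀ k < m + 1,
    (omegaCoeff r i (n - i) k (m - k) ≠ 0 → r ≤ i + k ∧ i + k - r < n + m - 2 * r + 1) ∧
    ∀ l < n + m - 2 * r + 1, c * W.entry l i k =
      if i + k = l + r then omegaCoeff r i (n - i) k (m - k) else 0

instance (W : BilinearTable) (n m r : ℕ) (c : ℤ) : Decidable (W.IsOmegaTable n m r c) :=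
  inferInstanceAs (Decidable (_ ∧ _))

theorem BilinearTable.IsOmegaTable.bilinear_eq_sum {W : BilinearTable} {n m r : ℕ} {c : ℤ}
    (hW : W.IsOmegaTable n m r c) (a b : ℕ → R) (l : ℕ) :
    bilinear W a b l = ∑ i ∈ Finset.range (n + 1), ∑ k ∈ Finset.range (m + 1),
      (W.entry l i k : R) * (a i * b k) := by
  have hrow : ∀ t ∈ W.getD l [], t.2.1 < n + 1 ∧ t.2.2 < m + 1 := by
    intro t ht
    rw [List.getD_eq_getElem?_getD] at ht
    rcases h : W[l]? with _ | row
    · simp [h] at ht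
    · rw [h] at ht
      exact hW.2.1 row (List.mem_of_getElem? h) t ht
  simp only [_root_.bilinear_eq_sum, entry]
  generalize W.getD l [] = row at hrow
  induction row with
  | nil => simp
  | cons t row ih =>
    obtain ⟨⟨hi, hk⟩, hrow⟩ := List.forall_mem_cons.1 hrow
    simp only [List.map_cons, List.sum_cons, Int.cast_add, add_mul, Finset.sum_add_distrib, ih hrow]
    congr 1
    rw [Finset.sum_eq_single_of_mem t.2.1 (Finset.mem_range.2 hi),
      Finset.sum_eq_single_of_mem t.2.2 (Finset.mem_range.2 hk)]
    · simp
    · intro k _ hk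
      simp [Prod.ext_iff, hk.symm]
    · intro i _ hi
      simp [Prod.ext_iff, hi.symm]

theorem BilinearTable.IsOmegaTable.omega_binaryForm {W : BilinearTable} {n m r : ℕ} {c : ℤ}
    (hW : W.IsOmegaTable n m r c) (a b : ℕ → R) :
    omega r (binaryForm n a) (binaryForm m b) =
      (c : R) • binaryForm (n + m - 2 * r) (bilinear W a b) := by
  have hentry {i k : ℕ} (hi : i ∈ Finset.range (n + 1)) (hk : k ∈ Finset.range (m + 1)) :
      (omegaCoeff r i (n - i) k (m - k) : R) •
          (X 0 ^ (i + k - r) * X 1 ^ (n - i + (m - k) - r) : MvPolynomial (Fin 2) R) =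
        ∑ l ∈ Finset.range (n + m - 2 * r + 1),
          ((c * W.entry l i k : ℤ) : R) • (X 0 ^ l * X 1 ^ (n + m - 2 * r - l)) := by
    rw [Finset.mem_range] at hi hk
    obtain ⟨hsupp, hW⟩ := hW.2.2 i hi k hk
    rw [Finset.sum_congr rfl fun l hl => by rw [hW l (Finset.mem_range.1 hl)]]
    by_cases h0 : omegaCoeff r i (n - i) k (m - k) = 0
    · simp [h0]
    obtain ⟨_, hlt⟩ := hsupp h0
    rw [Finset.sum_eq_single_of_mem (i + k - r) (Finset.mem_range.2 hlt), if_pos (by lia)]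
    · congr 3
      lia
    · intro l _ hl
      rw [if_neg (by lia), Int.cast_zero, zero_smul]
  calc
    _ = ∑ i ∈ Finset.range (n + 1), ∑ k ∈ Finset.range (m + 1),
        (a i * b k) • omega r (X 0 ^ i * X 1 ^ (n - i)) (X 0 ^ k * X 1 ^ (m - k)) := by
      simp only [binaryForm, map_sum, LinearMap.sum_apply, ← smul_eq_C_mul, map_smul,
        LinearMap.smul_apply, mul_smul, Finset.smul_sum]
      rw [Finset.sum_comm]
      exact Finset.sum_congr rfl fun i _ => Finset.sum_congr rfl fun k _ => smul_comm _ _ _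
    _ = ∑ i ∈ Finset.range (n + 1), ∑ k ∈ Finset.range (m + 1),
        ∑ l ∈ Finset.range (n + m - 2 * r + 1), (c * (W.entry l i k * (a i * b k))) •
          (X 0 ^ l * X 1 ^ (n + m - 2 * r - l) : MvPolynomial (Fin 2) R) := by
      refine Finset.sum_congr rfl fun i hi => Finset.sum_congr rfl fun k hk => ?_
      rw [omega_monomial, hentry hi hk, Finset.smul_sum]
      refine Finset.sum_congr rfl fun l _ => ?_
      rw [smul_smul, Int.cast_mul]
      congr 1
      ring
    _ = _ := by
      simp only [binaryForm, hW.bilinear_eq_sum, ← smul_eq_C_mul, Finset.smul_sum, smul_smul,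
        Finset.sum_smul]
      exact Finset.sum_comm_cycle

end BinaryForm

theorem isOmegaTable_table442 : table442.IsOmegaTable 4 4 2 6 := by decide +kernel
theorem isOmegaTable_table444 : table444.IsOmegaTable 4 4 4 48 := by decide +kernel
theorem isOmegaTable_table844 : table844.IsOmegaTable 8 4 4 144 := by decide +kernel
theorem isOmegaTable_table884 : table884.IsOmegaTable 8 8 4 720 := by decide +kernel
theorem isOmegaTable_table886 : table886.IsOmegaTable 8 8 6 259200 := by decide +kernel
theorem isOmegaTable_table888 : table888.IsOmegaTable 8 8 8 5806080 := by decide +kernel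

/-! ### Covariance under linear substitutions -/

section Covariance

variable {F : Type*} [Field F] (g : Matrix (Fin 2) (Fin 2) F)

theorem pderiv_substForm (j : Fin 2) (p : MvPolynomial (Fin 2) F) :
    pderiv j (substForm g p) =
      g 0 j • substForm g (pderiv 0 p) + g 1 j • substForm g (pderiv 1 p) := by
  simp only [substForm, smul_eq_C_mul]
  induction p using MvPolynomial.induction_on with
  | C a => simp
  | add p q hp hq =>
    simp only [map_add, hp, hq]
    ring
  | mul_X p i hp =>
    simp only [map_mul, Derivation.leibniz, aeval_X, smul_eq_mul, map_add, hp, pderiv_C]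
    fin_cases i <;> fin_cases j <;> simp [pderiv_X] <;> ring

theorem omega_substForm (r : ℕ) (p q : MvPolynomial (Fin 2) F) :
    omega r (substForm g p) (substForm g q) = g.det ^ r • substForm g (omega r p q) := by
  induction r generalizing p q with
  | zero => simp [omega, substForm]
  | succ r ih =>
    have hsub (x y) : substForm g (x - y) = substForm g x - substForm g y := map_sub _ x y
    simp only [omega_succ, pderiv_substForm, map_add, map_smul, LinearMap.add_apply,
      LinearMap.smul_apply, ih, hsub, Matrix.det_fin_two, pow_succ]
    module

/-- The binary forms of degree `n` with coefficients `a` and `b` are related by the substitution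
`g`, up to the factor `det g ^ w`. -/
def SubstRelated (n w : ℕ) (a b : ℕ → F) : Prop :=
  binaryForm n b = g.det ^ w • substForm g (binaryForm n a)

variable {g} {n m r w w' : ℕ} {a b a' b' : ℕ → F}

theorem SubstRelated.bilinear [CharZero F] {W : BilinearTable} {c : ℤ}
    (hW : W.IsOmegaTable n m r c) (h : SubstRelated g n w a b) (h' : SubstRelated g m w' a' b') :
    SubstRelated g (n + m - 2 * r) (w + w' + r) (bilinear W a a') (bilinear W b b') := by
  have hc : (c : F) ≠ 0 := Int.cast_ne_zero.2 hW.1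
  have hsmul (p) : substForm g ((c : F) • p) = (c : F) • substForm g p := map_smul _ _ p
  apply smul_right_injective _ hc
  calc
    _ = omega r (binaryForm n b) (binaryForm m b') := (hW.omega_binaryForm b b').symm
    _ = g.det ^ w • g.det ^ w' • g.det ^ r •
        substForm g (omega r (binaryForm n a) (binaryForm m a')) := by
      rw [h, h', map_smul, map_smul, LinearMap.smul_apply, omega_substForm, smul_comm]
    _ = _ := by
      rw [hW.omega_binaryForm, hsmul]
      module

theorem SubstRelated.apply_zero (h : SubstRelated g 0 w a b) : b 0 = g.det ^ w * a 0 := by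
  apply C_injective (Fin 2) F
  simpa [SubstRelated, binaryForm, substForm, smul_eq_C_mul] using h

theorem SubstRelated.integralInvariant [CharZero F] (h : SubstRelated g 8 0 a b) (n : ℕ) :
    integralInvariant b n = (g.det ^ 4) ^ n * integralInvariant a n := by
  have hG : SubstRelated g 8 4 (coeffG a) (coeffG b) := (h.bilinear isOmegaTable_table884 h :)
  have hK : SubstRelated g 4 6 (coeffK a) (coeffK b) := (h.bilinear isOmegaTable_table886 h :)
  have hH : SubstRelated g 4 14 (coeffH a) (coeffH b) := (hK.bilinear isOmegaTable_table442 hK :)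
  have hM : SubstRelated g 4 10 (coeffM a) (coeffM b) := (h.bilinear isOmegaTable_table844 hK :)
  have hN : SubstRelated g 4 18 (coeffN a) (coeffN b) := (h.bilinear isOmegaTable_table844 hH :)
  have hP : SubstRelated g 4 14 (coeffP a) (coeffP b) := (hG.bilinear isOmegaTable_table844 hK :)
  have hQ : SubstRelated g 4 22 (coeffQ a) (coeffQ b) := (hG.bilinear isOmegaTable_table844 hH :)
  rw [← pow_mul]
  match n with
  | 0 | 1 | _ + 11 => exact (mul_zero _).symm
  | 2 => exact (h.bilinear isOmegaTable_table888 h :).apply_zero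
  | 3 => exact (h.bilinear isOmegaTable_table888 hG :).apply_zero
  | 4 => exact (hK.bilinear isOmegaTable_table444 hK :).apply_zero
  | 5 => exact (hM.bilinear isOmegaTable_table444 hK :).apply_zero
  | 6 => exact (hK.bilinear isOmegaTable_table444 hH :).apply_zero
  | 7 => exact (hM.bilinear isOmegaTable_table444 hH :).apply_zero
  | 8 => exact (hP.bilinear isOmegaTable_table444 hH :).apply_zero
  | 9 => exact (hN.bilinear isOmegaTable_table444 hH :).apply_zero
  | 10 => exact (hQ.bilinear isOmegaTable_table444 hH :).apply_zero

end Covariance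

section Isobaric

variable {R : Type*} [CommRing R]

/-- All terms have weight `w` when `z n` has weight `n`. -/
def SyzygyTable.IsIsobaric (T : SyzygyTable) (w : ℕ) : Prop :=
  ∀ t ∈ T, ∑ i ∈ Finset.range 9, (i + 2) * t.2.getD i 0 = w

instance (T : SyzygyTable) (w : ℕ) : Decidable (T.IsIsobaric w) :=
  inferInstanceAs (Decidable (∀ t ∈ T, _))

theorem SyzygyTable.IsIsobaric.eval_pow_mul {T : SyzygyTable} {w : ℕ} (hT : T.IsIsobaric w)
    (u : R) (z : ℕ → R) : T.eval (fun n => u ^ n * z n) = u ^ w * T.eval z := by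
  simp only [SyzygyTable.eval_eq_sum, ← List.sum_map_mul_left]
  refine congrArg List.sum (List.map_congr_left fun t ht => ?_)
  simp only [mul_pow, ← pow_mul, Finset.prod_mul_distrib, Finset.prod_pow_eq_pow_sum, hT t ht]
  ring

end Isobaric

theorem isIsobaric_syzygy16 : syzygy16.IsIsobaric 16 := by decide
theorem isIsobaric_syzygy17 : syzygy17.IsIsobaric 17 := by decide
theorem isIsobaric_syzygy18 : syzygy18.IsIsobaric 18 := by decide
theorem isIsobaric_syzygy19 : syzygy19.IsIsobaric 19 := by decide

/-! ### From the slice to all octavics -/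

section BinaryForm

variable {R : Type*} [CommRing R]

theorem isHomogeneous_binaryForm (n : ℕ) (a : ℕ → R) : (binaryForm n a).IsHomogeneous n := by
  refine IsHomogeneous.sum _ _ _ fun i hi => ?_
  have := (isHomogeneous_C (Fin 2) (a i)).mul
    (((isHomogeneous_X R (0 : Fin 2)).pow i).mul ((isHomogeneous_X R 1).pow (n - i)))
  rwa [zero_add, one_mul, one_mul, Nat.add_sub_cancel' (Finset.mem_range_succ_iff.1 hi)] at this

theorem coeff_binaryForm (n : ℕ) (a : ℕ → R) (m : Fin 2 →₀ ℕ) :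
    coeff m (binaryForm n a) = if m 0 + m 1 = n then a (m 0) else 0 := by
  have hmonomial (i : ℕ) : coeff m (C (a i) * (X 0 ^ i * X 1 ^ (n - i))) =
      if i = m 0 ∧ n - i = m 1 then a i else 0 := by
    rw [X_pow_eq_monomial, X_pow_eq_monomial, monomial_mul, C_mul_monomial, coeff_monomial]
    simp [Finsupp.ext_iff]
  simp only [binaryForm, coeff_sum, hmonomial, ite_and]
  rw [Finset.sum_ite_eq']
  simp only [Finset.mem_range, ← ite_and]
  congr 1
  grind

theorem exists_binaryForm_eq {n : ℕ} {p : MvPolynomial (Fin 2) R} (hp : p.IsHomogeneous n) :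
    ∃ a, binaryForm n a = p := by
  refine ⟨fun i => coeff (Finsupp.single 0 i + Finsupp.single 1 (n - i)) p, ?_⟩
  ext m
  rw [coeff_binaryForm]
  split_ifs with hm
  · congr 1
    ext i
    fin_cases i
    · simp
    · simp [← hm]
  · refine (hp.coeff_eq_zero fun h => hm ?_).symm
    rw [← h, Finsupp.degree_eq_sum, Fin.sum_univ_two]

theorem eval_binaryForm (n : ℕ) (a : ℕ → R) (x y : R) :
    eval ![x, y] (binaryForm n a) = ∑ i ∈ Finset.range (n + 1), a i * (x ^ i * y ^ (n - i)) := by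
  simp [binaryForm]

theorem eval_zero_one_binaryForm (n : ℕ) (a : ℕ → R) : eval ![0, 1] (binaryForm n a) = a 0 := by
  rw [eval_binaryForm, Finset.sum_eq_single_of_mem 0 (by simp) fun i _ hi => by simp [hi]]
  simp

theorem eval_one_zero_binaryForm (n : ℕ) (a : ℕ → R) : eval ![1, 0] (binaryForm n a) = a n := by
  rw [eval_binaryForm, Finset.sum_eq_single_of_mem n (by simp)]
  · simp
  · intro i hi hin
    simp [Nat.sub_ne_zero_of_lt ((Finset.mem_range_succ_iff.1 hi).lt_of_ne hin)]

end BinaryForm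

section Normalisation

variable {F : Type*} [Field F]

theorem isHomogeneous_substForm (g : Matrix (Fin 2) (Fin 2) F) {n : ℕ}
    {p : MvPolynomial (Fin 2) F} (hp : p.IsHomogeneous n) : (substForm g p).IsHomogeneous n := by
  have hlin (i : Fin 2) :
      (C (g i 0) * X 0 + C (g i 1) * X 1 : MvPolynomial (Fin 2) F).IsHomogeneous 1 :=
    (isHomogeneous_C_mul_X _ _).add (isHomogeneous_C_mul_X _ _)
  rw [substForm]
  simpa only [one_mul] using hp.aeval _ hlin

theorem eval_substForm (g : Matrix (Fin 2) (Fin 2) F) (p : MvPolynomial (Fin 2) F) (x y : F) :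
    eval ![x, y] (substForm g p) = eval ![g 0 0 * x + g 0 1 * y, g 1 0 * x + g 1 1 * y] p := by
  simp only [← coe_aeval_eq_eval, RingHom.coe_coe]
  rw [substForm, comp_aeval_apply]
  congr 2
  ext i
  fin_cases i <;> simp

theorem exists_substRelated (g : Matrix (Fin 2) (Fin 2) F) (n : ℕ) (a : ℕ → F) :
    ∃ b, SubstRelated g n 0 a b := by
  obtain ⟨b, hb⟩ :=
    exists_binaryForm_eq (isHomogeneous_substForm g (isHomogeneous_binaryForm n a))
  exact ⟨b, by rw [SubstRelated, hb, pow_zero, one_smul]⟩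

theorem SubstRelated.apply_zero_eq_sum {g : Matrix (Fin 2) (Fin 2) F} {n : ℕ} {a b : ℕ → F}
    (h : SubstRelated g n 0 a b) :
    b 0 = ∑ i ∈ Finset.range (n + 1), a i * (g 0 1 ^ i * g 1 1 ^ (n - i)) := by
  rw [← eval_zero_one_binaryForm n b, h, pow_zero, one_smul, eval_substForm, eval_binaryForm]
  simp only [mul_zero, mul_one, zero_add]

theorem SubstRelated.apply_last_eq_sum {g : Matrix (Fin 2) (Fin 2) F} {n : ℕ} {a b : ℕ → F}
    (h : SubstRelated g n 0 a b) :
    b n = ∑ i ∈ Finset.range (n + 1), a i * (g 0 0 ^ i * g 1 0 ^ (n - i)) := by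
  rw [← eval_one_zero_binaryForm n b, h, pow_zero, one_smul, eval_substForm, eval_binaryForm]
  simp only [mul_zero, mul_one, add_zero]

theorem SyzygyTable.IsIsobaric.eval_eq_zero_of_substRelated [CharZero F] {T : SyzygyTable} {w : ℕ}
    (hT : T.IsIsobaric w) {g : Matrix (Fin 2) (Fin 2) F} (hg : g.det ≠ 0) {a b : ℕ → F}
    (h : SubstRelated g 8 0 a b) (hb : T.eval (integralInvariant b) = 0) :
    T.eval (integralInvariant a) = 0 := by
  rw [funext h.integralInvariant, hT.eval_pow_mul] at hb
  exact (mul_eq_zero.1 hb).resolve_left (pow_ne_zero _ (pow_ne_zero _ hg))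

theorem SyzygyTable.eval_eq_zero_of_forall_update [Infinite F] (T : SyzygyTable) (a : ℕ → F)
    (j : ℕ) (h : ∀ x ≠ 0, T.eval (integralInvariant (Function.update a j x)) = 0) :
    T.eval (integralInvariant a) = 0 := by
  let p : Polynomial F :=
    T.eval (integralInvariant (Function.update (fun i => .C (a i)) j .X))
  have hp (x : F) : p.eval x = T.eval (integralInvariant (Function.update a j x)) := by
    rw [← Polynomial.coe_evalRingHom, map_syzygyEval]
    simp only [map_integralInvariant]
    congr! with i
    by_cases hi : i = j <;> simp [Function.update, hi]
  have hp0 : p = 0 := Polynomial.eq_zero_of_infinite_isRoot p <|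
    (Set.finite_singleton 0).infinite_compl.mono fun x hx => (hp x).trans (h x hx)
  simpa [hp0] using (hp (a j)).symm

theorem exists_sum_mul_pow_eq_zero [IsAlgClosed F] {n : ℕ} (c : ℕ → F) {j : ℕ} (hj : j ≠ 0)
    (hjn : j ≤ n) (hc : c j ≠ 0) : ∃ x, ∑ i ∈ Finset.range (n + 1), c i * x ^ i = 0 := by
  let p : Polynomial F := ∑ i ∈ Finset.range (n + 1), .C (c i) * .X ^ i
  have hp : p.coeff j = c j := by
    simp [p, Polynomial.finsetSum_coeff, Polynomial.coeff_X_pow, hjn]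
  have hdeg : p.degree ≠ 0 := fun h => hc <| by
    rw [← hp, Polynomial.eq_C_of_degree_eq_zero h, Polynomial.coeff_C_of_ne_zero hj]
  simpa [p, Polynomial.IsRoot, Polynomial.eval_finsetSum] using IsAlgClosed.exists_root p hdeg

theorem exists_mul_pow_mul_pow_eq_one [IsAlgClosed F] {c d : F} (hc : c ≠ 0) (hd : d ≠ 0) :
    ∃ u v : F, c * (u ^ 4 * v ^ 4) = 1 ∧ d * (u ^ 5 * v ^ 3) = 1 := by
  obtain ⟨v, hv⟩ := IsAlgClosed.exists_pow_nat_eq (d ^ 4 / c ^ 5) (n := 8) (by norm_num)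
  have hcv : c * ((v * c / d) ^ 4 * v ^ 4) = 1 := by
    calc
      _ = c ^ 5 / d ^ 4 * v ^ 8 := by ring
      _ = 1 := by
        rw [hv]
        field_simp
  refine ⟨v * c / d, v, hcv, ?_⟩
  rw [← hcv]
  field_simp

variable [CharZero F] [IsAlgClosed F] {T : SyzygyTable} {w : ℕ}

theorem SyzygyTable.IsIsobaric.eval_eq_zero_of_slice (hT : T.IsIsobaric w)
    (hslice : ∀ x : Fin 5 → F, T.eval (integralInvariant fun i => (slice x).getD i 0) = 0)
    {a : ℕ → F} (h0 : a 0 = 0) (h8 : a 8 = 0) (h4 : a 4 ≠ 0) (h5 : a 5 ≠ 0) :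
    T.eval (integralInvariant a) = 0 := by
  obtain ⟨u, v, hc4, hc5⟩ := exists_mul_pow_mul_pow_eq_one h4 h5
  have hu0 : u ≠ 0 := by
    rintro rfl
    simp at hc4
  have hv0 : v ≠ 0 := by
    rintro rfl
    simp at hc4
  let x : Fin 5 → F := ![a 1 * (u ^ 1 * v ^ 7), a 2 * (u ^ 2 * v ^ 6), a 3 * (u ^ 3 * v ^ 5),
    a 6 * (u ^ 6 * v ^ 2), a 7 * (u ^ 7 * v ^ 1)]
  refine hT.eval_eq_zero_of_substRelated (g := Matrix.diagonal ![u, v])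
    (by simp [Matrix.det_diagonal, Fin.prod_univ_two, hu0, hv0]) ?_ (hslice x)
  rw [SubstRelated, pow_zero, one_smul, binaryForm, binaryForm, substForm, map_sum]
  refine Finset.sum_congr rfl fun i hi => ?_
  have hi : i < 9 := Finset.mem_range.1 hi
  have hcoeff : (slice x).getD i 0 = a i * (u ^ i * v ^ (8 - i)) := by
    interval_cases i <;> simp [slice, x, h0, h8, hc4, hc5]
  rw [hcoeff]
  simp only [Matrix.diagonal_apply, aeval_eq_bind₁, map_mul, algHom_C, algebraMap_eq, map_pow,
    bind₁_X_right, ↓reduceIte, Matrix.cons_val_zero, zero_ne_one, C_0, zero_mul, add_zero,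
    one_ne_zero, Matrix.cons_val_one, Matrix.cons_val_fin_one, zero_add]
  ring

theorem SyzygyTable.IsIsobaric.eval_eq_zero_of_apply_eq_zero (hT : T.IsIsobaric w)
    (hslice : ∀ x : Fin 5 → F, T.eval (integralInvariant fun i => (slice x).getD i 0) = 0)
    {a : ℕ → F} (h0 : a 0 = 0) (h8 : a 8 = 0) : T.eval (integralInvariant a) = 0 := by
  refine T.eval_eq_zero_of_forall_update a 4 fun x hx =>
    T.eval_eq_zero_of_forall_update _ 5 fun y hy => hT.eval_eq_zero_of_slice hslice ?_ ?_ ?_ ?_ <;>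
  simpa

theorem SyzygyTable.IsIsobaric.eval_eq_zero_of_apply_zero_eq_zero (hT : T.IsIsobaric w)
    (hslice : ∀ x : Fin 5 → F, T.eval (integralInvariant fun i => (slice x).getD i 0) = 0)
    {a : ℕ → F} (h0 : a 0 = 0) : T.eval (integralInvariant a) = 0 := by
  refine T.eval_eq_zero_of_forall_update a 7 fun y hy => ?_
  obtain ⟨s, hs⟩ := exists_sum_mul_pow_eq_zero (n := 8)
    (fun i => Function.update a 7 y (8 - i)) one_ne_zero (by norm_num) (by simpa using hy)
  obtain ⟨b, hb⟩ := exists_substRelated !![1, 0; s, 1] 8 (Function.update a 7 y)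
  refine hT.eval_eq_zero_of_substRelated (by simp) hb
    (hT.eval_eq_zero_of_apply_eq_zero hslice ?_ ?_)
  · rw [hb.apply_zero_eq_sum, Finset.sum_eq_single_of_mem 0 (by simp) fun i _ hi => by simp [hi]]
    simp [h0]
  · rw [hb.apply_last_eq_sum, ← hs, ← Finset.sum_range_reflect]
    refine Finset.sum_congr rfl fun i hi => ?_
    rw [Nat.add_sub_cancel, Nat.sub_sub_self (Finset.mem_range_succ_iff.1 hi)]
    simp

theorem SyzygyTable.IsIsobaric.eval_eq_zero_of_isAlgClosed (hT : T.IsIsobaric w)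
    (hslice : ∀ x : Fin 5 → F, T.eval (integralInvariant fun i => (slice x).getD i 0) = 0)
    (a : ℕ → F) : T.eval (integralInvariant a) = 0 := by
  refine T.eval_eq_zero_of_forall_update a 8 fun y hy => ?_
  obtain ⟨t, ht⟩ := exists_sum_mul_pow_eq_zero (n := 8) (Function.update a 8 y)
    (by norm_num) le_rfl (by simpa using hy)
  obtain ⟨b, hb⟩ := exists_substRelated !![1, t; 0, 1] 8 (Function.update a 8 y)
  refine hT.eval_eq_zero_of_substRelated (by simp) hb
    (hT.eval_eq_zero_of_apply_zero_eq_zero hslice ?_)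
  rw [hb.apply_zero_eq_sum, ← ht]
  simp

end Normalisation

theorem SyzygyTable.IsIsobaric.eval_eq_zero {T : SyzygyTable} {w : ℕ} (hT : T.IsIsobaric w)
    (hslice : ∀ x : Fin 5 → AlgebraicClosure ℚ,
      T.eval (integralInvariant fun i => (slice x).getD i 0) = 0)
    {R : Type*} [CommRing R] (a : ℕ → R) : T.eval (integralInvariant a) = 0 := by
  let P : MvPolynomial ℕ ℤ := T.eval (integralInvariant X)
  have hP0 : P = 0 := by
    apply map_injective (Int.castRingHom (AlgebraicClosure ℚ)) Int.cast_injective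
    refine funext fun a => ?_
    simp only [P, map_zero, eval_map, ← coe_eval₂Hom, map_syzygyEval, map_integralInvariant]
    exact hT.eval_eq_zero_of_isAlgClosed hslice _
  simpa only [P, map_syzygyEval, map_integralInvariant, coe_eval₂Hom, eval₂_X, map_zero] using
    congrArg (eval₂Hom (Int.castRingHom R) a) hP0

theorem syzygy16_eval {R : Type*} [CommRing R] (a : ℕ → R) :
    syzygy16.eval (integralInvariant a) = 0 :=
  isIsobaric_syzygy16.eval_eq_zero syzygy16_slice a

theorem syzygy17_eval {R : Type*} [CommRing R] (a : ℕ → R) :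
    syzygy17.eval (integralInvariant a) = 0 :=
  isIsobaric_syzygy17.eval_eq_zero syzygy17_slice a

theorem syzygy18_eval {R : Type*} [CommRing R] (a : ℕ → R) :
    syzygy18.eval (integralInvariant a) = 0 :=
  isIsobaric_syzygy18.eval_eq_zero syzygy18_slice a

theorem syzygy19_eval {R : Type*} [CommRing R] (a : ℕ → R) :
    syzygy19.eval (integralInvariant a) = 0 :=
  isIsobaric_syzygy19.eval_eq_zero syzygy19_slice a

/-! ### The invariants `J₂, …, J₈` in terms of integral invariants -/

section BinaryForm

variable {R : Type*} [CommRing R]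

theorem pderiv_commute (p : MvPolynomial (Fin 2) R) :
    pderiv 0 (pderiv 1 p) = pderiv 1 (pderiv 0 p) := by
  have h : ⁅(pderiv 0 : Derivation R (MvPolynomial (Fin 2) R) (MvPolynomial (Fin 2) R)),
      (pderiv 1 : Derivation R (MvPolynomial (Fin 2) R) (MvPolynomial (Fin 2) R))⁆ = 0 := by
    refine derivation_ext fun i => ?_
    fin_cases i <;> simp [Derivation.commutator_apply]
  simpa only [Derivation.commutator_apply, Derivation.coe_zero, Pi.zero_apply, sub_eq_zero] using
    DFunLike.congr_fun h p

theorem omega_eq_sum_antidiagonal (r : ℕ) (f g : MvPolynomial (Fin 2) R) :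
    omega r f g = ∑ ij ∈ Finset.HasAntidiagonal.antidiagonal r,
      (r.choose ij.1 : MvPolynomial (Fin 2) R) *
      ((-1) ^ ij.1 * ((pderiv 0)^[ij.2] ((pderiv 1)^[ij.1] f) *
        (pderiv 0)^[ij.1] ((pderiv 1)^[ij.2] g))) := by
  have hcomm (n : ℕ) (p : MvPolynomial (Fin 2) R) :
      (pderiv 1)^[n] (pderiv 0 p) = pderiv 0 ((pderiv 1)^[n] p) :=
    (Function.Commute.iterate_right pderiv_commute n p).symm
  induction r generalizing f g with
  | zero => simp [omega]
  | succ r ih =>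
    rw [omega_succ, ih, ih, Finset.sum_antidiagonal_choose_succ_mul (fun i j => (-1) ^ i *
      ((pderiv 0)^[j] ((pderiv 1)^[i] f) * (pderiv 0)^[i] ((pderiv 1)^[j] g))), sub_eq_add_neg,
      ← Finset.sum_neg_distrib]
    refine congrArg₂ (· + ·) (Finset.sum_congr rfl fun _ _ => ?_)
      (Finset.sum_congr rfl fun ij hij => ?_)
    · simp only [hcomm, Function.iterate_succ_apply]
    · simp only [hcomm, Function.iterate_succ_apply, pow_succ,
        Nat.choose_symm_of_eq_add (Finset.HasAntidiagonal.mem_antidiagonal.1 hij).symm]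
      ring

theorem constantCoeff_smul_binaryForm_zero (c : R) (a : ℕ → R) :
    constantCoeff (c • binaryForm 0 a) = c * a 0 := by
  simp [binaryForm]

end BinaryForm

section Invariants

variable {K : Type*} [Field K]

theorem transvectant_eq_smul_omega (n m r : ℕ) (f g : MvPolynomial (Fin 2) K) :
    transvectant n m r f g =
      ((((m - r).factorial * (n - r).factorial : ℕ) : K) / ((n.factorial * m.factorial : ℕ) : K)) •
        omega r f g := by
  rw [transvectant, smul_eq_C_mul, omega_eq_sum_antidiagonal,
    Finset.Nat.sum_antidiagonal_eq_sum_range_succ_mk]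
  congr 1
  refine Finset.sum_congr rfl fun j _ => ?_
  simp only [C_mul, C_pow, C_neg, C_1, map_natCast]
  ring

theorem BilinearTable.IsOmegaTable.transvectant_smul_binaryForm {W : BilinearTable}
    {n m r : ℕ} {c : ℤ} (hW : W.IsOmegaTable n m r c)
    (h0 : ((n.factorial * m.factorial : ℕ) : K) ≠ 0) {s : K}
    (hs : ((m - r).factorial * (n - r).factorial : ℕ) * c * s = (n.factorial * m.factorial : ℕ))
    (α β : K) (a b : ℕ → K) :
    transvectant n m r (α • binaryForm n a) (β • binaryForm m b) =
      (α * β / s) • binaryForm (n + m - 2 * r) (bilinear W a b) := by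
  have hs0 : s ≠ 0 := right_ne_zero_of_mul (hs ▸ h0)
  rw [transvectant_eq_smul_omega, map_smul, map_smul, LinearMap.smul_apply, hW.omega_binaryForm,
    smul_smul, smul_smul, smul_smul, ← hs]
  congr 1
  rw [div_mul_eq_mul_div, div_mul_eq_mul_div, div_mul_eq_mul_div, div_eq_div_iff (hs ▸ hs ▸ h0) hs0]
  ring

namespace CharOK

variable (h : CharOK K)
include h

theorem prime_cast_ne_zero : (2 : K) ≠ 0 ∧ (3 : K) ≠ 0 ∧ (5 : K) ≠ 0 ∧ (7 : K) ≠ 0 :=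
  ⟨CharP.cast_ne_zero_of_ne_of_prime K Nat.prime_two h.1,
    CharP.cast_ne_zero_of_ne_of_prime K Nat.prime_three h.2.1,
    CharP.cast_ne_zero_of_ne_of_prime K Nat.prime_five h.2.2.1,
    CharP.cast_ne_zero_of_ne_of_prime K Nat.prime_seven h.2.2.2⟩

theorem intCast_ne_zero {n : ℤ} {e : ℕ} (hn : n ∣ 210 ^ e) : (n : K) ≠ 0 := by
  obtain ⟨h2, h3, h5, h7⟩ := h.prime_cast_ne_zero
  have h210 : (210 : K) ≠ 0 := by
    rw [show (210 : K) = 2 * 3 * 5 * 7 by norm_num]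
    exact mul_ne_zero (mul_ne_zero (mul_ne_zero h2 h3) h5) h7
  exact ne_zero_of_dvd_ne_zero (pow_ne_zero e h210)
    (by exact_mod_cast Int.cast_dvd_cast (α := K) _ _ hn)

theorem natCast_ne_zero {n e : ℕ} (hn : n ∣ 210 ^ e) : (n : K) ≠ 0 := by
  exact_mod_cast h.intCast_ne_zero (n := n) (e := e) (by exact_mod_cast hn)

variable (α β : K) (a b : ℕ → K)

theorem transvectant_table442 : transvectant 4 4 2 (α • binaryForm 4 a) (β • binaryForm 4 b) =
    (α * β / (2 ^ 3 * 3)) • binaryForm 4 (bilinear table442 a b) :=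
  isOmegaTable_table442.transvectant_smul_binaryForm
    (h.natCast_ne_zero (e := 14) (by decide)) (by norm_num [Nat.factorial]) α β a b

theorem transvectant_table444 : transvectant 4 4 4 (α • binaryForm 4 a) (β • binaryForm 4 b) =
    (α * β / (2 ^ 2 * 3)) • binaryForm 0 (bilinear table444 a b) :=
  isOmegaTable_table444.transvectant_smul_binaryForm
    (h.natCast_ne_zero (e := 14) (by decide)) (by norm_num [Nat.factorial]) α β a b

theorem transvectant_table844 : transvectant 8 4 4 (α • binaryForm 8 a) (β • binaryForm 4 b) =
    (α * β / (2 ^ 3 * 5 * 7)) • binaryForm 4 (bilinear table844 a b) :=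
  isOmegaTable_table844.transvectant_smul_binaryForm
    (h.natCast_ne_zero (e := 14) (by decide)) (by norm_num [Nat.factorial]) α β a b

theorem transvectant_table884 : transvectant 8 8 4 (α • binaryForm 8 a) (β • binaryForm 8 b) =
    (α * β / (2 ^ 4 * 5 * 7 ^ 2)) • binaryForm 8 (bilinear table884 a b) :=
  isOmegaTable_table884.transvectant_smul_binaryForm
    (h.natCast_ne_zero (e := 14) (by decide)) (by norm_num [Nat.factorial]) α β a b

theorem transvectant_table886 : transvectant 8 8 6 (α • binaryForm 8 a) (β • binaryForm 8 b) =
    (α * β / (2 ^ 5 * 7 ^ 2)) • binaryForm 4 (bilinear table886 a b) :=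
  isOmegaTable_table886.transvectant_smul_binaryForm
    (h.natCast_ne_zero (e := 14) (by decide)) (by norm_num [Nat.factorial]) α β a b

theorem transvectant_table888 : transvectant 8 8 8 (α • binaryForm 8 a) (β • binaryForm 8 b) =
    (α * β / (2 ^ 3 * 5 * 7)) • binaryForm 0 (bilinear table888 a b) :=
  isOmegaTable_table888.transvectant_smul_binaryForm
    (h.natCast_ne_zero (e := 14) (by decide)) (by norm_num [Nat.factorial]) α β a b

end CharOK

/-- The coefficients of an octavic as a sequence, extended by zero, so that the tables of bilinear
maps apply to them. -/
def coeffSeq {R : Type*} [Zero R] (a : Fin 9 → R) (i : ℕ) : R :=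
  if hi : i < 9 then a ⟨i, hi⟩ else 0

theorem octForm_eq_smul_binaryForm (a : Fin 9 → K) :
    octForm a = (1 : K) • binaryForm 8 (coeffSeq a) := by
  rw [one_smul, octForm, binaryForm, Finset.sum_range]
  exact Finset.sum_congr rfl fun i _ => by simp [coeffSeq, mul_assoc]

namespace CharOK

variable (h : CharOK K) (a : Fin 9 → K)
include h

theorem covg_eq : covg a = (1 / (2 ^ 4 * 5 * 7 ^ 2) : K) • binaryForm 8 (coeffG (coeffSeq a)) := by
  rw [covg, octForm_eq_smul_binaryForm, h.transvectant_table884, coeffG]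
  norm_num

theorem covk_eq : covk a = (1 / (2 ^ 5 * 7 ^ 2) : K) • binaryForm 4 (coeffK (coeffSeq a)) := by
  rw [covk, octForm_eq_smul_binaryForm, h.transvectant_table886, coeffK]
  norm_num

theorem covh_eq :
    covh a = (1 / (2 ^ 13 * 3 * 7 ^ 4) : K) • binaryForm 4 (coeffH (coeffSeq a)) := by
  obtain ⟨_, _, _, _⟩ := h.prime_cast_ne_zero
  rw [covh, h.covk_eq, h.transvectant_table442, coeffH]
  field_simp

theorem covm_eq :
    covm a = (1 / (2 ^ 8 * 5 * 7 ^ 3) : K) • binaryForm 4 (coeffM (coeffSeq a)) := by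
  obtain ⟨_, _, _, _⟩ := h.prime_cast_ne_zero
  rw [covm, h.covk_eq, octForm_eq_smul_binaryForm, h.transvectant_table844, coeffM]
  field_simp

theorem covp_eq :
    covp a = (1 / (2 ^ 12 * 5 ^ 2 * 7 ^ 5) : K) • binaryForm 4 (coeffP (coeffSeq a)) := by
  obtain ⟨_, _, _, _⟩ := h.prime_cast_ne_zero
  rw [covp, h.covk_eq, h.covg_eq, h.transvectant_table844, coeffP]
  field_simp

theorem J2_eq : J2 a = integralInvariant (coeffSeq a) 2 / 2 := by
  obtain ⟨_, _, _, _⟩ := h.prime_cast_ne_zero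
  rw [J2, octForm_eq_smul_binaryForm, h.transvectant_table888, constantCoeff_smul_binaryForm_zero,
    integralInvariant]
  field_simp

theorem J3_eq : J3 a = integralInvariant (coeffSeq a) 3 / 24 := by
  obtain ⟨_, _, _, _⟩ := h.prime_cast_ne_zero
  rw [J3, octForm_eq_smul_binaryForm, h.covg_eq, h.transvectant_table888,
    constantCoeff_smul_binaryForm_zero, integralInvariant, show (24 : K) = 2 ^ 3 * 3 by norm_num]
  field_simp

theorem J4_eq : J4 a = integralInvariant (coeffSeq a) 4 / 8 := by
  obtain ⟨_, _, _, _⟩ := h.prime_cast_ne_zero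
  rw [J4, h.covk_eq, h.transvectant_table444,
    constantCoeff_smul_binaryForm_zero, integralInvariant, show (8 : K) = 2 ^ 3 by norm_num]
  field_simp

theorem J5_eq : J5 a = integralInvariant (coeffSeq a) 5 / 192 := by
  obtain ⟨_, _, _, _⟩ := h.prime_cast_ne_zero
  rw [J5, h.covm_eq, h.covk_eq, h.transvectant_table444,
    constantCoeff_smul_binaryForm_zero, integralInvariant, show (192 : K) = 2 ^ 6 * 3 by norm_num]
  field_simp

theorem J6_eq : J6 a = integralInvariant (coeffSeq a) 6 / 64 := by
  obtain ⟨_, _, _, _⟩ := h.prime_cast_ne_zero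
  rw [J6, h.covh_eq, h.covk_eq, h.transvectant_table444,
    constantCoeff_smul_binaryForm_zero, integralInvariant, show (64 : K) = 2 ^ 6 by norm_num]
  field_simp

theorem J7_eq : J7 a = integralInvariant (coeffSeq a) 7 / 1536 := by
  obtain ⟨_, _, _, _⟩ := h.prime_cast_ne_zero
  rw [J7, h.covh_eq, h.covm_eq, h.transvectant_table444,
    constantCoeff_smul_binaryForm_zero, integralInvariant, show (1536 : K) = 2 ^ 9 * 3 by norm_num]
  field_simp

theorem J8_eq : J8 a = integralInvariant (coeffSeq a) 8 / 3072 := by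
  obtain ⟨_, _, _, _⟩ := h.prime_cast_ne_zero
  rw [J8, h.covh_eq, h.covp_eq, h.transvectant_table444,
    constantCoeff_smul_binaryForm_zero, integralInvariant, show (3072 : K) = 2 ^ 10 * 3 by norm_num]
  field_simp

end CharOK

end Invariants

/-! ### Algebraic independence from initial terms -/

section InitialTerm

variable {R : Type*} [CommRing R]

/-- `p` vanishes to order at least `d` along `x = 0`, with (possibly zero) coefficient `c` of
`x ^ d`. -/
def HasInitialTerm (x : R) (d : ℕ) (c p : R) : Prop := ∃ q, p = x ^ d * (c + x * q)

namespace HasInitialTerm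

variable {x c c' p p' : R} {d d' : ℕ}

theorem congr_coeff (h : HasInitialTerm x d c p) (hc : c = c') : HasInitialTerm x d c' p := hc ▸ h

theorem pow_mul (x : R) (d : ℕ) (c : R) : HasInitialTerm x d c (x ^ d * c) := ⟨0, by ring⟩

theorem add (h : HasInitialTerm x d c p) (h' : HasInitialTerm x d c' p') :
    HasInitialTerm x d (c + c') (p + p') := by
  obtain ⟨q, rfl⟩ := h
  obtain ⟨q', rfl⟩ := h'
  exact ⟨q + q', by ring⟩

theorem mul (h : HasInitialTerm x d c p) (h' : HasInitialTerm x d' c' p') :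
    HasInitialTerm x (d + d') (c * c') (p * p') := by
  obtain ⟨q, rfl⟩ := h
  obtain ⟨q', rfl⟩ := h'
  exact ⟨c * q' + q * c' + x * q * q', by ring⟩

theorem const_mul (h : HasInitialTerm x d c p) (s : R) : HasInitialTerm x d (s * c) (s * p) := by
  obtain ⟨q, rfl⟩ := h
  exact ⟨s * q, by ring⟩

theorem of_lt (h : HasInitialTerm x d c p) (hd : d' < d) : HasInitialTerm x d' 0 p := by
  obtain ⟨q, rfl⟩ := h
  obtain ⟨e, rfl⟩ := Nat.exists_eq_add_of_lt hd
  exact ⟨x ^ e * (c + x * q), by ring⟩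

theorem list_sum {ι : Type*} {u v : ι → R} {l : List ι}
    (h : ∀ i ∈ l, HasInitialTerm x d (u i) (v i)) :
    HasInitialTerm x d (l.map u).sum (l.map v).sum := by
  induction l with
  | nil => exact ⟨0, by simp⟩
  | cons i l ih =>
    rw [List.forall_mem_cons] at h
    simpa only [List.map_cons, List.sum_cons] using h.1.add (ih h.2)

end HasInitialTerm

/-- Coefficient of `x ^ γ l` in `bilinear W a b l`, if `u i` and `v j` are the coefficients of
`x ^ α i` and `x ^ β j` in `a i` and `b j` and all terms have order at least `γ l`. -/
def BilinearTable.initial (W : BilinearTable) (α β γ : ℕ → ℕ) (u v : ℕ → R) (l : ℕ) : R :=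
  ((W.getD l []).map fun t =>
    if α t.2.1 + β t.2.2 = γ l then (t.1 : R) * (u t.2.1 * v t.2.2) else 0).sum

theorem HasInitialTerm.bilinear {x : R} {α β γ : ℕ → ℕ} {a b u v : ℕ → R}
    (ha : ∀ i, HasInitialTerm x (α i) (u i) (a i)) (hb : ∀ i, HasInitialTerm x (β i) (v i) (b i))
    (W : BilinearTable)
    (hW : ∀ l < W.length, ∀ t ∈ W.getD l [], γ l ≤ α t.2.1 + β t.2.2) (l : ℕ) :
    HasInitialTerm x (γ l) (W.initial α β γ u v l) (bilinear W a b l) := by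
  rw [bilinear_eq_sum, BilinearTable.initial]
  refine HasInitialTerm.list_sum fun t ht => ?_
  have hl : l < W.length := by
    by_contra hl
    rw [List.getD_eq_default _ _ (not_lt.1 hl)] at ht
    exact List.not_mem_nil ht
  have hprod := ((ha t.2.1).mul (hb t.2.2)).const_mul (t.1 : R)
  split_ifs with heq
  · exact heq ▸ hprod
  · exact hprod.of_lt (lt_of_le_of_ne (hW l hl t ht) (Ne.symm heq))

end InitialTerm

section Degeneration

variable {R : Type*} [CommRing R]

/-- Orders in `x` of the coefficients of `f` along `degeneration x z`; those of the coefficients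
which are zero there are chosen large. -/
def orderF (i : ℕ) : ℕ := [9, 0, 9, 2, 2, 3, 2, 3, 0].getD i 0

/-- Lower bounds for the orders in `x` of the coefficients of `g` along `degeneration x z`. -/
def orderG (i : ℕ) : ℕ := [2, 2, 2, 2, 2, 0, 2, 2, 2].getD i 0

/-- Orders in `x` of the coefficients of `κ` along `degeneration x z`. -/
def orderK (i : ℕ) : ℕ := [3, 2, 3, 0, 4].getD i 0

/-- Orders in `x` of the coefficients of `h` along `degeneration x z`. -/
def orderH (i : ℕ) : ℕ := [4, 3, 2, 3, 0].getD i 0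

/-- Orders in `x` of the coefficients of `m` along `degeneration x z`. -/
def orderM (i : ℕ) : ℕ := [0, 4, 2, 2, 3].getD i 0

/-- Orders in `x` of the invariants along `degeneration x z`. -/
def orderInvariant (n : ℕ) : ℕ := [0, 0, 3, 2, 2, 4, 3, 0].getD n 0

/-- Initial coefficients in `x` of the coefficients of `f` along `degeneration x z`. -/
def initialF (z : Fin 6 → R) (i : ℕ) : R := [0, z 0, 0, z 1, z 2, z 3, z 4, z 5, 1].getD i 0

/-- One-parameter family of octavics along which the initial terms of `Z₂, …, Z₇` are monomials in
`z` with linearly independent exponents. -/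
def degeneration (x : R) (z : Fin 6 → R) (i : ℕ) : R := x ^ orderF i * initialF z i

/-- Coefficients of the monomials in the initial terms of the integral invariants `Z₂, …, Z₇`. -/
def initialInvariantCoeff : Fin 6 → ℤ :=
  ![-70, -58800, 658560, -26342400, 2788079616, 607181783040]

/-- Row `i` is the exponent of the monomial in the initial term of `Z_(i+2)`. -/
def initialInvariantExponent : Matrix (Fin 6) (Fin 6) ℕ :=
  !![1, 0, 0, 0, 0, 1;
     1, 1, 0, 0, 0, 0;
     2, 0, 0, 0, 1, 0;
     2, 0, 1, 0, 1, 0;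
     3, 0, 0, 1, 0, 0;
     4, 0, 0, 0, 0, 0]

theorem hasInitialTerm_integralInvariant (x : R) (z : Fin 6 → R) (i : Fin 6) :
    HasInitialTerm x (orderInvariant (i + 2))
      (initialInvariantCoeff i * ∏ j, z j ^ initialInvariantExponent i j)
      (integralInvariant (degeneration x z) (i + 2)) := by
  have hf (i : ℕ) : HasInitialTerm x (orderF i) (initialF z i) (degeneration x z i) := .pow_mul ..
  have hg := HasInitialTerm.bilinear (γ := orderG) hf hf table884 (by decide)
  have hk := HasInitialTerm.bilinear (γ := orderK) hf hf table886 (by decide)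
  have hh := HasInitialTerm.bilinear (γ := orderH) hk hk table442 (by decide)
  have hm := HasInitialTerm.bilinear (γ := orderM) hf hk table844 (by decide)
  fin_cases i
  on_goal 1 => refine (HasInitialTerm.bilinear (γ := fun _ => orderInvariant 2)
    hf hf table888 (by decide) 0).congr_coeff ?_
  on_goal 2 => refine (HasInitialTerm.bilinear (γ := fun _ => orderInvariant 3)
    hf hg table888 (by decide) 0).congr_coeff ?_
  on_goal 3 => refine (HasInitialTerm.bilinear (γ := fun _ => orderInvariant 4)
    hk hk table444 (by decide) 0).congr_coeff ?_
  on_goal 4 => refine (HasInitialTerm.bilinear (γ := fun _ => orderInvariant 5)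
    hm hk table444 (by decide) 0).congr_coeff ?_
  on_goal 5 => refine (HasInitialTerm.bilinear (γ := fun _ => orderInvariant 6)
    hk hh table444 (by decide) 0).congr_coeff ?_
  on_goal 6 => refine (HasInitialTerm.bilinear (γ := fun _ => orderInvariant 7)
    hm hh table444 (by decide) 0).congr_coeff ?_
  all_goals
    simp only [BilinearTable.initial, table884, table886, table888, table442, table844, table444,
      orderF, orderG, orderK, orderH, orderM, orderInvariant, initialF, initialInvariantCoeff,
      initialInvariantExponent, List.getD_cons_zero, List.getD_cons_succ, List.map_cons,
      List.map_nil, List.sum_cons, List.sum_nil, Fin.prod_univ_six, Fin.reduceFinMk, Fin.zero_eta,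
      Fin.mk_one, Fin.isValue, Matrix.of_apply, Matrix.cons_val, Nat.reduceAdd, Nat.reduceEqDiff,
      OfNat.ofNat_ne_zero, ↓reduceIte, Int.reduceNeg, Int.cast_neg,
      Int.cast_ofNat]
    ring

end Degeneration

section AlgebraicIndependence

variable {ι σ R : Type*} [CommRing R]

theorem aeval_monomial_family (m : ι → σ →₀ ℕ) (c : ι → R) (p : MvPolynomial ι R) :
    aeval (fun i => monomial (m i) (c i)) p =
      ∑ t ∈ p.support, monomial (Finsupp.linearCombination ℕ m t)
        (p.coeff t * t.prod fun i k => c i ^ k) := by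
  rw [aeval_def, eval₂_eq]
  refine Finset.sum_congr rfl fun t _ => ?_
  rw [Finsupp.linearCombination_apply, monomial_finsupp_sum_index, algebraMap_eq, C_mul, mul_assoc,
    Finsupp.prod, Finsupp.prod, map_prod, ← Finset.prod_mul_distrib]
  simp only [monomial_pow, C_mul_monomial, mul_one]

theorem algebraicIndependent_monomial [IsDomain R] {m : ι → σ →₀ ℕ} (hm : LinearIndependent ℕ m)
    {c : ι → R} (hc : ∀ i, c i ≠ 0) : AlgebraicIndependent R fun i => monomial (m i) (c i) := by
  classical
  rw [algebraicIndependent_iff]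
  intro p hp
  by_contra hne
  obtain ⟨s, hs⟩ := MvPolynomial.ne_zero_iff.1 hne
  have hcoeff := congrArg (coeff (Finsupp.linearCombination ℕ m s)) hp
  rw [aeval_monomial_family, coeff_sum, coeff_zero, Finset.sum_eq_single s] at hcoeff
  · rw [coeff_monomial, if_pos rfl] at hcoeff
    exact mul_ne_zero hs (Finset.prod_ne_zero_iff.2 fun i _ => pow_ne_zero _ (hc i)) hcoeff
  · exact fun t _ hts => by rw [coeff_monomial, if_neg (hm.ne hts)]
  · exact fun h => absurd (mem_support_iff.2 hs) h

variable {B : Type*} [CommRing B] [Algebra R B]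

theorem HasInitialTerm.coeff {d e : ℕ} {c : B} {p : Polynomial B}
    (h : HasInitialTerm Polynomial.X d (Polynomial.C c) p) (he : e ≤ d) :
    p.coeff e = if d = e then c else 0 := by
  obtain ⟨q, rfl⟩ := h
  rw [Polynomial.coeff_X_pow_mul']
  split_ifs with hde heq heq
  · subst heq
    simp
  · exact absurd (le_antisymm hde he) heq
  · exact absurd heq.le hde
  · rfl

theorem HasInitialTerm.prod_pow {x : B} {d : ι → ℕ} {c p : ι → B}
    (h : ∀ i, HasInitialTerm x (d i) (c i) (p i)) (t : ι →₀ ℕ) :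
    HasInitialTerm x (Finsupp.linearCombination ℕ d t) (t.prod fun i k => c i ^ k)
      (t.prod fun i k => p i ^ k) := by
  have hpow (i : ι) (k : ℕ) : HasInitialTerm x (k • d i) (c i ^ k) (p i ^ k) := by
    induction k with
    | zero => exact ⟨0, by simp⟩
    | succ k ih => simpa only [pow_succ, succ_nsmul] using ih.mul (h i)
  rw [Finsupp.linearCombination_apply, Finsupp.sum, Finsupp.prod, Finsupp.prod]
  induction t.support using Finset.cons_induction with
  | empty => exact ⟨0, by simp⟩
  | cons i s hi ih =>
    simpa only [Finset.sum_cons, Finset.prod_cons] using (hpow i (t i)).mul ih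

/-- A polynomial relation between the `p i` restricts, in the lowest order in which its terms
occur, to one between the initial coefficients. -/
theorem algebraicIndependent_of_hasInitialTerm {d : ι → ℕ} {c : ι → B} {p : ι → Polynomial B}
    (h : ∀ i, HasInitialTerm Polynomial.X (d i) (Polynomial.C (c i)) (p i))
    (hc : AlgebraicIndependent R c) : AlgebraicIndependent R p := by
  classical
  rw [algebraicIndependent_iff] at hc ⊢
  intro P hP
  by_contra hne
  let order (t : ι →₀ ℕ) : ℕ := Finsupp.linearCombination ℕ d t
  obtain ⟨s, hs, hmin⟩ := Finset.exists_min_image P.support order (support_nonempty.2 hne)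
  let Q : MvPolynomial ι R := ∑ t ∈ P.support with order t = order s, monomial t (P.coeff t)
  have hQ : Q.coeff s = P.coeff s := by
    simp [Q, coeff_sum, coeff_monomial, Finset.sum_ite_eq', hs]
  refine mem_support_iff.1 hs
    (hQ ▸ (congrArg (MvPolynomial.coeff s) (hc Q ?_)).trans (coeff_zero s))
  have hcoeff := congrArg (fun q => Polynomial.coeff q (order s)) hP
  simp only [Polynomial.coeff_zero] at hcoeff
  rw [← hcoeff, aeval_def (p := P), eval₂_eq, Polynomial.finsetSum_coeff, map_sum,
    Finset.sum_filter]
  refine Finset.sum_congr rfl fun t ht => ?_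
  have hterm := HasInitialTerm.prod_pow h t
  simp only [← map_pow, ← map_finsuppProd] at hterm
  rw [IsScalarTower.algebraMap_apply R B (Polynomial B), ← Polynomial.C_eq_algebraMap,
    Polynomial.coeff_C_mul, ← Finsupp.prod, hterm.coeff (hmin t ht), aeval_monomial, mul_ite,
    mul_zero]

end AlgebraicIndependence

theorem linearIndependent_initialInvariantExponent : LinearIndependent ℕ fun i =>
    (Finsupp.equivFunOnFinite.symm (initialInvariantExponent i) : Fin 6 →₀ ℕ) := by
  rw [Fintype.linearIndependent_iffₛ]
  intro s t h
  have hcol (j : Fin 6) := DFunLike.congr_fun h j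
  simp only [initialInvariantExponent, Fin.sum_univ_six, Fin.isValue, Finsupp.coe_add,
    Finsupp.coe_smul, Finsupp.coe_equivFunOnFinite_symm, nsmul_eq_mul, Pi.add_apply, Pi.mul_apply,
    Pi.natCast_apply, Nat.cast_id, Matrix.of_apply, Matrix.cons_val', Matrix.cons_val_fin_one,
    Matrix.cons_val_zero, Matrix.cons_val_one, Matrix.cons_val, Fin.forall_fin_succ, mul_one,
    Matrix.cons_val_succ, mul_zero, zero_add, add_zero, forall_const, Fin.succ_zero_eq_one,
    Fin.succ_one_eq_two, Fin.reduceSucc, IsEmpty.forall_iff, and_true] at hcol ⊢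
  lia

section GenericInvariants

variable {K : Type*} [Field K]

namespace CharOK

variable (h : CharOK K)
include h

theorem initialInvariantCoeff_ne_zero (i : Fin 6) : (initialInvariantCoeff i : K) ≠ 0 := by
  refine h.intCast_ne_zero (e := 20) ?_
  fin_cases i <;> decide

theorem algebraicIndependent_integralInvariant : AlgebraicIndependent K fun i : Fin 6 =>
    integralInvariant (coeffSeq (X : Fin 9 → MvPolynomial (Fin 9) K)) (i + 2) := by
  let A : ℕ → Polynomial (MvPolynomial (Fin 6) K) :=
    degeneration Polynomial.X fun j => Polynomial.C (X j)
  let φ : MvPolynomial (Fin 9) K →ₐ[K] Polynomial (MvPolynomial (Fin 6) K) :=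
    aeval fun i : Fin 9 => A i
  have hφ (n : ℕ) : φ (integralInvariant (coeffSeq X) n) = integralInvariant A n := by
    refine (map_integralInvariant φ.toRingHom _ n).trans (congrArg (integralInvariant · n) ?_)
    funext i
    by_cases hi : i < 9
    · simp [coeffSeq, φ, hi]
    · simp [coeffSeq, hi, A, degeneration, initialF]
  have hinit (i : Fin 6) : HasInitialTerm Polynomial.X (orderInvariant (i + 2))
      (Polynomial.C (monomial (Finsupp.equivFunOnFinite.symm (initialInvariantExponent i))
        (initialInvariantCoeff i : K))) (integralInvariant A (i + 2)) := by
    refine (hasInitialTerm_integralInvariant _ _ i).congr_coeff ?_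
    rw [monomial_eq, Finsupp.prod_fintype _ _ (by simp)]
    simp
  refine AlgebraicIndependent.of_comp φ ?_
  have := algebraicIndependent_of_hasInitialTerm hinit (algebraicIndependent_monomial
    linearIndependent_initialInvariantExponent h.initialInvariantCoeff_ne_zero)
  simpa only [Function.comp_def, hφ] using this

end CharOK

end GenericInvariants

/-! ### Rescaling to `Z₃ = Z₂` -/

section Dehomogenisation

open IntermediateField.algebraAdjoinAdjoin

variable {ι K E : Type*} [Field K] [Field E] [Algebra K E]

/-- Both families have as many members as the transcendence degree of `K(y)`. -/
theorem algebraicIndependent_of_forall_mem_adjoin [Finite ι] {x y : ι → E}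
    (hx : AlgebraicIndependent K x)
    (h : ∀ i, x i ∈ IntermediateField.adjoin K (Set.range y)) : AlgebraicIndependent K y := by
  let M := IntermediateField.adjoin K (Set.range y)
  let y' (i : ι) : M := ⟨y i, IntermediateField.subset_adjoin _ _ ⟨i, rfl⟩⟩
  let x' (i : ι) : M := ⟨x i, h i⟩
  have hx' : AlgebraicIndependent K x' := .of_comp M.val hx
  have : Algebra.IsAlgebraic (Algebra.adjoin K (Set.range y')) M := by
    refine ⟨fun m => ?_⟩
    obtain ⟨r, s, hrs⟩ := (IntermediateField.mem_adjoin_range_iff K y m).1 m.2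
    have hm : m = aeval y' r / aeval y' s := Subtype.ext <| hrs.trans <|
      congrArg₂ (· / ·) (comp_aeval_apply y' M.val r).symm (comp_aeval_apply y' M.val s).symm
    have hmem := (IntermediateField.mem_adjoin_range_iff K y' m).2 ⟨r, s, hm⟩
    exact (Algebra.IsAlgebraic.isAlgebraic (R := Algebra.adjoin K (Set.range y'))
      (⟨m, hmem⟩ : IntermediateField.adjoin K (Set.range y'))).algebraMap (A := M)
  exact (Algebra.IsAlgebraic.isTranscendenceBasis_of_lift_le_trdeg_of_finite K y'
    hx'.lift_cardinalMk_le_trdeg).1.map' (f := M.val) Subtype.val_injective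

theorem algebraicIndependent_div_pow [Finite ι] {x : ι → E} (hx : AlgebraicIndependent K x)
    {i j : ι} (hij : i ≠ j) (w : ι → ℕ) :
    AlgebraicIndependent K fun l : {l // l ≠ j} => x l / (x j / x i) ^ w l := by
  classical
  let θ := x j / x i
  have hθ : θ ≠ 0 := div_ne_zero (hx.ne_zero j) (hx.ne_zero i)
  let y : ι → E := Function.update (fun l => x l / θ ^ w l) j θ
  have hyj : y j = θ := Function.update_self ..
  have hy (l : ι) (hl : l ≠ j) : y l = x l / θ ^ w l := Function.update_of_ne hl ..
  have hmem (l : ι) : y l ∈ IntermediateField.adjoin K (Set.range y) :=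
    IntermediateField.subset_adjoin _ _ ⟨l, rfl⟩
  have hx_mem (l : ι) (hl : l ≠ j) : x l ∈ IntermediateField.adjoin K (Set.range y) := by
    rw [← div_mul_cancel₀ (x l) (pow_ne_zero (w l) hθ), ← hy l hl, ← hyj]
    exact mul_mem (hmem l) (pow_mem (hmem j) _)
  have hindep : AlgebraicIndependent K y := by
    refine algebraicIndependent_of_forall_mem_adjoin hx fun l => ?_
    obtain rfl | hl := eq_or_ne l j
    · rw [← div_mul_cancel₀ (x l) (hx.ne_zero i)]
      exact mul_mem (hyj.symm ▸ hmem l : θ ∈ _) (hx_mem i hij)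
    · exact hx_mem l hl
  have hy' : (fun l : {l // l ≠ j} => x l / θ ^ w l) = y ∘ Subtype.val :=
    funext fun l => (hy l l.2).symm
  exact hy' ▸ hindep.comp _ Subtype.val_injective

/-- The absolute invariants `t₁, …, t₅` in terms of the values `z` of the integral invariants
`Z₂, Z₄, Z₅, Z₆, Z₇` after rescaling the octavic so that `Z₃ = Z₂`. -/
def absoluteInvariants (z : Fin 5 → E) : Fin 5 → E :=
  ![1 / (72 * z 0), z 1 / (2 * z 0 ^ 2), z 2 / (4 * z 0 ^ 2), z 3 / (4 * z 0 * z 1),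
    z 4 / (4 * z 0 * z 2)]

theorem absoluteInvariants_mem_adjoin (z : Fin 5 → E) (i : Fin 5) :
    absoluteInvariants z i ∈ IntermediateField.adjoin K (Set.range z) := by
  have hz (i) : z i ∈ IntermediateField.adjoin K (Set.range z) :=
    IntermediateField.subset_adjoin _ _ ⟨i, rfl⟩
  fin_cases i
  · exact div_mem (one_mem _) (mul_mem (ofNat_mem _ 72) (hz 0))
  · exact div_mem (hz 1) (mul_mem (ofNat_mem _ 2) (pow_mem (hz 0) 2))
  · exact div_mem (hz 2) (mul_mem (ofNat_mem _ 4) (pow_mem (hz 0) 2))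
  · exact div_mem (hz 3) (mul_mem (mul_mem (ofNat_mem _ 4) (hz 0)) (hz 1))
  · exact div_mem (hz 4) (mul_mem (mul_mem (ofNat_mem _ 4) (hz 0)) (hz 2))

theorem CharOK.mem_adjoin_absoluteInvariants (h : CharOK E) {z : Fin 5 → E} (hz : ∀ i, z i ≠ 0)
    (i : Fin 5) : z i ∈ IntermediateField.adjoin K (Set.range (absoluteInvariants z)) := by
  set M := IntermediateField.adjoin K (Set.range (absoluteInvariants z))
  have ht (i) : absoluteInvariants z i ∈ M := IntermediateField.subset_adjoin _ _ ⟨i, rfl⟩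
  have c72 : (72 : E) ≠ 0 := by exact_mod_cast h.natCast_ne_zero (n := 72) (e := 3) (by decide)
  have c4 : (4 : E) ≠ 0 := by exact_mod_cast h.natCast_ne_zero (n := 4) (e := 2) (by decide)
  have c2 : (2 : E) ≠ 0 := h.prime_cast_ne_zero.1
  have mem_of_div_mem {a b : E} (hb : b ≠ 0) (hbM : b ∈ M) (hab : a / b ∈ M) : a ∈ M :=
    div_mul_cancel₀ a hb ▸ mul_mem hab hbM
  have h0 : z 0 ∈ M := by
    rw [← mul_div_cancel_left₀ (z 0) c72, ← one_div_one_div (72 * z 0)]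
    exact div_mem (div_mem (one_mem _) (ht 0)) (ofNat_mem _ 72)
  have h1 : z 1 ∈ M := mem_of_div_mem (mul_ne_zero c2 (pow_ne_zero 2 (hz 0)))
    (mul_mem (ofNat_mem _ 2) (pow_mem h0 2)) (ht 1)
  have h2 : z 2 ∈ M := mem_of_div_mem (mul_ne_zero c4 (pow_ne_zero 2 (hz 0)))
    (mul_mem (ofNat_mem _ 4) (pow_mem h0 2)) (ht 2)
  fin_cases i
  · exact h0
  · exact h1
  · exact h2
  · exact mem_of_div_mem (mul_ne_zero (mul_ne_zero c4 (hz 0)) (hz 1))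
      (mul_mem (mul_mem (ofNat_mem _ 4) h0) h1) (ht 3)
  · exact mem_of_div_mem (mul_ne_zero (mul_ne_zero c4 (hz 0)) (hz 2))
      (mul_mem (mul_mem (ofNat_mem _ 4) h0) h2) (ht 4)

theorem CharOK.adjoin_range_absoluteInvariants (h : CharOK E) {z : Fin 5 → E} (hz : ∀ i, z i ≠ 0) :
    IntermediateField.adjoin K (Set.range (absoluteInvariants z)) =
      IntermediateField.adjoin K (Set.range z) := by
  refine le_antisymm ?_ ?_ <;> rw [IntermediateField.adjoin_le_iff, Set.range_subset_iff]
  · exact absoluteInvariants_mem_adjoin z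
  · exact h.mem_adjoin_absoluteInvariants hz

end Dehomogenisation

/-! ### Multiplication by `Z₈` -/

section Quintic

variable {R S : Type*} [CommRing R] [CommRing S]

/-- Values of the integral invariants `Z₂, ..., Z₁₀` of an octavic rescaled so that `Z₃ = Z₂`. -/
def normalisedValues (z : Fin 5 → R) (u v w : R) (n : ℕ) : R :=
  [0, 0, z 0, z 0, z 1, z 2, z 3, z 4, u, v, w].getD n 0

namespace SyzygyTable

/-- Coefficient of `Z₈ ^ e₀ * Z₉ ^ e₁ * Z₁₀ ^ e₂` in the syzygy `T`, where `e = [e₀, e₁, e₂]`. -/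
def coeffAt (T : SyzygyTable) (e : List ℕ) (z : Fin 5 → R) : R :=
  SyzygyTable.eval (T.filter fun t => t.2.drop 6 = e) (normalisedValues z 1 1 1)

theorem map_coeffAt (f : R →+* S) (T : SyzygyTable) (e : List ℕ) (z : Fin 5 → R) :
    f (T.coeffAt e z) = T.coeffAt e fun i => f (z i) := by
  refine (isRingRelation_graph f).syzygyEval _ fun n => ?_
  match n with
  | 0 | 1 | _ + 11 => exact map_zero f
  | 2 | 3 | 4 | 5 | 6 | 7 => rfl
  | 8 | 9 | 10 => exact map_one f

theorem eval_eq_sum_coeffAt (T : SyzygyTable) {P : Finset (List ℕ)} (hP : ∀ t ∈ T, t.2.drop 6 ∈ P)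
    (z : Fin 5 → R) (u v w : R) : T.eval (normalisedValues z u v w) =
      ∑ e ∈ P, T.coeffAt e z * (u ^ e.getD 0 0 * v ^ e.getD 1 0 * w ^ e.getD 2 0) := by
  simp only [coeffAt, SyzygyTable.eval_eq_sum]
  induction T with
  | nil => simp
  | cons t T ih =>
    have hcons (f : ℤ × List ℕ → R) (e : List ℕ) :
        (((t :: T).filter fun t => t.2.drop 6 = e).map f).sum =
          (if t.2.drop 6 = e then f t else 0) +
            ((T.filter fun t => t.2.drop 6 = e).map f).sum := by
      by_cases he : t.2.drop 6 = e <;> simp [he]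
    simp only [hcons, add_mul, Finset.sum_add_distrib, List.map_cons, List.sum_cons, ite_mul,
      zero_mul, Finset.sum_ite_eq, hP t (by simp), if_true, ih fun t ht => hP t (by simp [ht])]
    simp [Finset.prod_range_succ, normalisedValues, mul_assoc]

end SyzygyTable

/-- Exponents of `Z₈, Z₉, Z₁₀` in the monomials `1, Z₈, Z₉, Z₁₀, Z₉ ^ 2`, which span
`k(Z₂, ..., Z₇)[Z₈, Z₉, Z₁₀]` over `k(Z₂, ..., Z₇)`. -/
def basisExponent : Fin 5 → List ℕ := ![[0, 0, 0], [1, 0, 0], [0, 1, 0], [0, 0, 1], [0, 2, 0]]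

/-- Values of the monomials with exponents `basisExponent` at `Z₈ = u, Z₉ = v, Z₁₀ = w`. -/
def basisVector (u v w : R) : Fin 5 → R := ![1, u, v, w, v ^ 2]

/-- The only monomial in `Z₈, Z₉, Z₁₀` of `T` outside the basis is the one with exponents `e`, and
it comes with the constant coefficient `c`. -/
structure SyzygyTable.HasLeadingTerm (T : SyzygyTable) (c : ℤ) (e : List ℕ) : Prop where
  drop_mem : ∀ t ∈ T, t.2.drop 6 ∈ insert e (Finset.univ.image basisExponent)
  notMem : e ∉ Finset.univ.image basisExponent
  filter_eq : T.filter (fun t => t.2.drop 6 = e) = [(c, [0, 0, 0, 0, 0, 0] ++ e)]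

theorem hasLeadingTerm_syzygy16 : syzygy16.HasLeadingTerm 2025 [2, 0, 0] where
  drop_mem := by decide
  notMem := by decide
  filter_eq := by decide

theorem hasLeadingTerm_syzygy17 : syzygy17.HasLeadingTerm 6750 [1, 1, 0] where
  drop_mem := by decide
  notMem := by decide
  filter_eq := by decide

theorem hasLeadingTerm_syzygy18 : syzygy18.HasLeadingTerm 455625 [1, 0, 1] where
  drop_mem := by decide
  notMem := by decide
  filter_eq := by decide

theorem hasLeadingTerm_syzygy19 : syzygy19.HasLeadingTerm 33750 [0, 1, 1] where
  drop_mem := by decide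
  notMem := by decide
  filter_eq := by decide

theorem SyzygyTable.HasLeadingTerm.eval_eq {T : SyzygyTable} {c : ℤ} {e : List ℕ}
    (hT : T.HasLeadingTerm c e) (z : Fin 5 → R) (u v w : R) :
    T.eval (normalisedValues z u v w) =
      c * (u ^ e.getD 0 0 * v ^ e.getD 1 0 * w ^ e.getD 2 0) +
        ∑ i, T.coeffAt (basisExponent i) z * basisVector u v w i := by
  have hinj : Function.Injective basisExponent := by decide
  rw [T.eval_eq_sum_coeffAt hT.drop_mem, Finset.sum_insert hT.notMem, Finset.sum_image hinj.injOn]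
  congr 1
  · simp [coeffAt, hT.filter_eq, SyzygyTable.eval_eq_sum, Finset.prod_range_succ, normalisedValues]
  · refine Finset.sum_congr rfl fun i _ => ?_
    fin_cases i <;> simp [basisExponent, basisVector]

section Matrix

variable (K : Type*) [Field K] [Algebra K R] [Algebra K S]

/-- Coordinates with respect to `basisVector` of the leading monomial of the syzygy `T`, whose
leading coefficient is `c`. -/
def reduction (T : SyzygyTable) (c : ℤ) (z : Fin 5 → R) (i : Fin 5) : R :=
  algebraMap K R (-(c : K)⁻¹) * T.coeffAt (basisExponent i) z

theorem map_reduction (f : R →ₐ[K] S) (T : SyzygyTable) (c : ℤ) (z : Fin 5 → R) (i : Fin 5) :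
    f (reduction K T c z i) = reduction K T c (fun i => f (z i)) i := by
  rw [reduction, map_mul, AlgHom.commutes]
  exact congrArg _ (T.map_coeffAt f.toRingHom _ z)

variable {K} in
theorem SyzygyTable.HasLeadingTerm.reduction_dotProduct {T : SyzygyTable} {c : ℤ} {e : List ℕ}
    (hT : T.HasLeadingTerm c e) (hc : (c : K) ≠ 0) {z : Fin 5 → R} {u v w : R}
    (h : T.eval (normalisedValues z u v w) = 0) :
    reduction K T c z ⬝ᵥ basisVector u v w =
      u ^ e.getD 0 0 * v ^ e.getD 1 0 * w ^ e.getD 2 0 := by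
  have hsum : reduction K T c z ⬝ᵥ basisVector u v w = algebraMap K R (-(c : K)⁻¹) *
      ∑ i, T.coeffAt (basisExponent i) z * basisVector u v w i := by
    simp only [dotProduct, reduction, Finset.mul_sum, mul_assoc]
  have hinv : algebraMap K R (c : K)⁻¹ * c = 1 := by
    rw [← map_intCast (algebraMap K R), ← map_mul, inv_mul_cancel₀ hc, map_one]
  rw [hT.eval_eq] at h
  rw [hsum, map_neg]
  linear_combination (-algebraMap K R (c : K)⁻¹) * h +
    (u ^ e.getD 0 0 * v ^ e.getD 1 0 * w ^ e.getD 2 0) * hinv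

/-- Matrix of multiplication by `Z₈` in the basis `1, Z₈, Z₉, Z₁₀, Z₉ ^ 2`. The first four rows
are the coordinates of `Z₈, Z₈ ^ 2, Z₈ * Z₉, Z₈ * Z₁₀`; the last one comes from
`Z₈ * Z₉ ^ 2 = Z₉ * (Z₈ * Z₉)`. -/
def mulMatrix (z : Fin 5 → R) : Matrix (Fin 5) (Fin 5) R :=
  let r := reduction K syzygy17 6750 z
  .of ![Pi.single 1 1, reduction K syzygy16 2025 z, r, reduction K syzygy18 455625 z,
    r 0 • Pi.single 2 1 + r 1 • r + r 2 • Pi.single 4 1 + r 3 • reduction K syzygy19 33750 z]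

theorem mulMatrix_map (f : R →ₐ[K] S) (z : Fin 5 → R) :
    (mulMatrix K z).map f = mulMatrix K fun i => f (z i) := by
  ext i j
  rw [Matrix.map_apply]
  fin_cases i
  · exact (Pi.apply_single (fun _ => f) (fun _ => map_zero f) 1 1 j).trans (by rw [map_one]; rfl)
  · exact map_reduction ..
  · exact map_reduction ..
  · exact map_reduction ..
  · fin_cases j <;> simp [mulMatrix, map_reduction]

variable {K}

theorem CharOK.mulMatrix_mulVec (h : CharOK K) {z : Fin 5 → R} {u v w : R}
    (h16 : syzygy16.eval (normalisedValues z u v w) = 0)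
    (h17 : syzygy17.eval (normalisedValues z u v w) = 0)
    (h18 : syzygy18.eval (normalisedValues z u v w) = 0)
    (h19 : syzygy19.eval (normalisedValues z u v w) = 0) :
    (mulMatrix K z).mulVec (basisVector u v w) = u • basisVector u v w := by
  have r16 := hasLeadingTerm_syzygy16.reduction_dotProduct
    (h.intCast_ne_zero (e := 4) (by decide)) h16
  have r17 := hasLeadingTerm_syzygy17.reduction_dotProduct
    (h.intCast_ne_zero (e := 3) (by decide)) h17
  have r18 := hasLeadingTerm_syzygy18.reduction_dotProduct
    (h.intCast_ne_zero (e := 6) (by decide)) h18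
  have r19 := hasLeadingTerm_syzygy19.reduction_dotProduct
    (h.intCast_ne_zero (e := 4) (by decide)) h19
  have r17_four : reduction K syzygy17 6750 z 4 = 0 := by
    have : syzygy17.filter (fun t => t.2.drop 6 = basisExponent 4) = [] := by decide
    rw [reduction, SyzygyTable.coeffAt, this, SyzygyTable.eval_eq_sum, List.map_nil, List.sum_nil,
      mul_zero]
  funext i
  fin_cases i
  · exact (single_one_dotProduct 1 _).trans (mul_one u).symm
  · exact r16.trans (by simp [basisVector, sq])
  · exact r17.trans (by simp [basisVector])
  · exact r18.trans (by simp [basisVector])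
  · let r : Fin 5 → R := reduction K syzygy17 6750 z
    change (r 0 • Pi.single 2 1 + r 1 • r + r 2 • Pi.single 4 1 +
      r 3 • reduction K syzygy19 33750 z) ⬝ᵥ basisVector u v w = u * v ^ 2
    have hr : r 0 * 1 + r 1 * u + r 2 * v + r 3 * w + 0 * v ^ 2 = u * v := by
      rw [← r17_four]
      refine (Fin.sum_univ_five fun i => r i * basisVector u v w i).symm.trans (r17.trans ?_)
      simp
    have hr17 : r ⬝ᵥ basisVector u v w = u * v := r17.trans (by simp)
    have hr19 : reduction K syzygy19 33750 z ⬝ᵥ basisVector u v w = v * w := r19.trans (by simp)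
    have e2 : Pi.single 2 1 ⬝ᵥ basisVector u v w = v := single_one_dotProduct 2 _
    have e4 : Pi.single 4 1 ⬝ᵥ basisVector u v w = v ^ 2 := single_one_dotProduct 4 _
    simp only [add_dotProduct, smul_dotProduct, smul_eq_mul, hr17, hr19, e2, e4]
    linear_combination v * hr

theorem CharOK.eval_charpoly_mulMatrix [IsDomain R] (h : CharOK K) {z : Fin 5 → R} {u v w : R}
    (h16 : syzygy16.eval (normalisedValues z u v w) = 0)
    (h17 : syzygy17.eval (normalisedValues z u v w) = 0)
    (h18 : syzygy18.eval (normalisedValues z u v w) = 0)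
    (h19 : syzygy19.eval (normalisedValues z u v w) = 0) :
    (mulMatrix K z).charpoly.eval u = 0 := by
  rw [Matrix.eval_charpoly, ← Matrix.exists_mulVec_eq_zero_iff]
  refine ⟨basisVector u v w, fun h0 => one_ne_zero (congrFun h0 0), ?_⟩
  rw [Matrix.sub_mulVec, h.mulMatrix_mulVec h16 h17 h18 h19, sub_eq_zero]
  ext i
  simp [Matrix.scalar_apply, Matrix.mulVec_diagonal]

end Matrix

end Quintic

/-! ### Irreducibility of the characteristic polynomial of `Z₈` -/

section Specialisation

variable {R : Type*} [CommRing R]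

theorem syzygy16_coeffAt_specialised (x : R) (i : Fin 5) :
    syzygy16.coeffAt (basisExponent i) ![0, 0, x, 0, 1] = ![0, 0, -330750, 0, 0] i := by
  fin_cases i <;> simp [SyzygyTable.coeffAt, syzygy16, SyzygyTable.eval_eq_sum, basisExponent,
    Finset.prod_range_succ, normalisedValues]

theorem syzygy17_coeffAt_specialised (x : R) (i : Fin 5) :
    syzygy17.coeffAt (basisExponent i) ![0, 0, x, 0, 1] = ![0, 0, 0, -3375, 0] i := by
  fin_cases i <;> simp [SyzygyTable.coeffAt, syzygy17, SyzygyTable.eval_eq_sum, basisExponent,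
    Finset.prod_range_succ, normalisedValues]

theorem syzygy18_coeffAt_specialised (x : R) (i : Fin 5) :
    syzygy18.coeffAt (basisExponent i) ![0, 0, x, 0, 1] = ![0, 0, 0, 0, -148837500] i := by
  fin_cases i <;> simp [SyzygyTable.coeffAt, syzygy18, SyzygyTable.eval_eq_sum, basisExponent,
    Finset.prod_range_succ, normalisedValues]

theorem syzygy19_coeffAt_specialised (x : R) (i : Fin 5) :
    syzygy19.coeffAt (basisExponent i) ![0, 0, x, 0, 1] =
      ![2126250 * x, 0, -2126250 * x ^ 2, 0, 0] i := by
  fin_cases i <;> simp [SyzygyTable.coeffAt, syzygy19, SyzygyTable.eval_eq_sum, basisExponent,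
    Finset.prod_range_succ, normalisedValues]

theorem charpoly_five (a b c d e : R) :
    (Matrix.of ![![0, 1, 0, 0, 0], ![0, 0, a, 0, 0], ![0, 0, 0, b, 0], ![0, 0, 0, 0, c],
      ![d, 0, e, 0, 0]]).charpoly =
      Polynomial.X ^ 5 - Polynomial.C (b * c * e) * Polynomial.X ^ 2 -
        Polynomial.C (a * b * c * d) := by
  simp [Matrix.charpoly, Matrix.charmatrix, Matrix.det_succ_row_zero, Fin.sum_univ_succ,
    Matrix.scalar_apply, Matrix.diagonal, Fin.succAbove]
  ring

variable {K : Type*} [Field K] [Algebra K R]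

theorem mulMatrix_specialised (x : R) :
    mulMatrix K ![0, 0, x, 0, 1] =
      let α (q : K) : R := algebraMap K R q
      .of ![![0, 1, 0, 0, 0], ![0, 0, α (330750 / 2025), 0, 0], ![0, 0, 0, α (3375 / 6750), 0],
        ![0, 0, 0, 0, α (148837500 / 455625)],
        ![-α (3375 / 6750 * (2126250 / 33750)) * x, 0,
          α (3375 / 6750 * (2126250 / 33750)) * x ^ 2, 0, 0]] := by
  ext i j
  fin_cases i <;> fin_cases j <;>
    simp [mulMatrix, reduction, syzygy16_coeffAt_specialised, syzygy17_coeffAt_specialised,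
      syzygy18_coeffAt_specialised, syzygy19_coeffAt_specialised, div_eq_inv_mul, mul_assoc,
      map_ofNat (algebraMap K R)]

theorem CharOK.charpoly_mulMatrix_specialised (h : CharOK K) (x : R) :
    (mulMatrix K ![0, 0, x, 0, 1]).charpoly =
      Polynomial.X ^ 5 - Polynomial.C (5145 * x ^ 2) * Polynomial.X ^ 2 +
        Polynomial.C (840350 * x) := by
  have hne (n : ℕ) (e : ℕ) (hn : n ∣ 210 ^ e) : (n : K) ≠ 0 := h.natCast_ne_zero hn
  have c2025 := hne 2025 4 (by decide)
  have c6750 := hne 6750 4 (by decide)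
  have c455625 := hne 455625 6 (by decide)
  have c33750 := hne 33750 4 (by decide)
  push_cast at c2025 c6750 c455625 c33750
  have h2 : algebraMap K R (3375 / 6750) * algebraMap K R (148837500 / 455625) *
      algebraMap K R (3375 / 6750 * (2126250 / 33750)) = 5145 := by
    rw [← map_mul, ← map_mul, ← map_ofNat (algebraMap K R)]
    congr 1
    field_simp
    norm_num
  have h0 : algebraMap K R (330750 / 2025) * 5145 = 840350 := by
    rw [← map_ofNat (algebraMap K R), ← map_ofNat (algebraMap K R), ← map_mul]
    congr 1
    field_simp
    norm_num
  rw [mulMatrix_specialised, charpoly_five, sub_eq_add_neg _ (Polynomial.C _), ← map_neg]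
  congr 3
  · congr 1
    linear_combination x ^ 2 * h2
  · linear_combination x * h0 + algebraMap K R (330750 / 2025) * x * h2

end Specialisation

section Degree

open IntermediateField

variable {K : Type*} [Field K]

theorem CharOK.irreducible_charpoly_mulMatrix_specialised (h : CharOK K) :
    Irreducible (mulMatrix K ![0, 0, (Polynomial.X : Polynomial K), 0, 1]).charpoly := by
  have hprime : (Ideal.span {(Polynomial.X : Polynomial K)}).IsPrime :=
    (Ideal.span_singleton_prime Polynomial.X_ne_zero).2 Polynomial.prime_X
  have hmonic : (mulMatrix K ![0, 0, (Polynomial.X : Polynomial K), 0, 1]).charpoly.Monic :=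
    Matrix.charpoly_monic _
  have hdeg : (mulMatrix K ![0, 0, (Polynomial.X : Polynomial K), 0, 1]).charpoly.natDegree = 5 :=
    Matrix.charpoly_natDegree_eq_dim _
  have hconst : (840350 : K) ≠ 0 := by
    exact_mod_cast h.natCast_ne_zero (n := 840350) (e := 5) (by decide)
  refine Polynomial.IsEisensteinAt.irreducible (𝓟 := Ideal.span {Polynomial.X})
    ⟨?_, fun {n} hn => ?_, ?_⟩ hprime hmonic.isPrimitive (by omega)
  · rw [hmonic.leadingCoeff]
    exact fun h1 => hprime.ne_top ((Ideal.eq_top_iff_one _).2 h1)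
  · rw [hdeg] at hn
    rw [Ideal.mem_span_singleton, h.charpoly_mulMatrix_specialised]
    simp only [Polynomial.coeff_add, Polynomial.coeff_sub, Polynomial.coeff_C_mul,
      Polynomial.coeff_X_pow, hn.ne, if_false, zero_sub, Polynomial.coeff_C]
    refine dvd_add (dvd_neg.2 (((dvd_pow_self _ two_ne_zero).mul_left _).mul_right _)) ?_
    split_ifs
    exacts [dvd_mul_left _ _, dvd_zero _]
  · rw [Ideal.span_singleton_pow, Ideal.mem_span_singleton, h.charpoly_mulMatrix_specialised,
      Polynomial.X_pow_dvd_iff]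
    intro h0
    refine hconst ?_
    simpa [← map_ofNat (Polynomial.C)] using h0 1 one_lt_two

theorem CharOK.irreducible_charpoly_mulMatrix (h : CharOK K) :
    Irreducible (mulMatrix K (X : Fin 5 → MvPolynomial (Fin 5) K)).charpoly := by
  let φ : MvPolynomial (Fin 5) K →ₐ[K] Polynomial K := aeval ![0, 0, Polynomial.X, 0, 1]
  refine (Matrix.charpoly_monic _).irreducible_of_irreducible_map φ.toRingHom _ ?_
  have hφ : (mulMatrix K (X : Fin 5 → MvPolynomial (Fin 5) K)).map φ =
      mulMatrix K ![0, 0, Polynomial.X, 0, 1] := by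
    rw [mulMatrix_map]
    exact congrArg _ (funext fun i => aeval_X _ i)
  have hmap := Matrix.charpoly_map (mulMatrix K (X : Fin 5 → MvPolynomial (Fin 5) K)) φ.toRingHom
  exact hmap ▸ hφ ▸ h.irreducible_charpoly_mulMatrix_specialised

variable {E : Type*} [Field E] [Algebra K E]

theorem isIntegral_and_natDegree_minpoly_of_irreducible {ι : Type*} {z : ι → E}
    (hz : AlgebraicIndependent K z) {Q : Polynomial (MvPolynomial ι K)} (hQ : Q.Monic)
    (hirr : Irreducible Q) {u : E} (hu : (Q.map (aeval z : _ →ₐ[K] E).toRingHom).eval u = 0) :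
    IsIntegral (adjoin K (Set.range z)) u ∧
      (minpoly (adjoin K (Set.range z)) u).natDegree = Q.natDegree := by
  let F := FractionRing (MvPolynomial ι K)
  let e := hz.aevalEquivField.toRingEquiv
  let P := (Q.map (algebraMap _ F)).map e.toRingHom
  have hP : P.Monic := (hQ.map _).map _
  have hPirr : Irreducible P := (MulEquiv.irreducible_iff (Polynomial.mapEquiv e)).2 <|
    (hQ.irreducible_iff_irreducible_map_fraction_map (K := F)).1 hirr
  have hcomp : ((algebraMap (adjoin K (Set.range z)) E).comp e.toRingHom).comp
      (algebraMap _ F) = (aeval z : _ →ₐ[K] E).toRingHom :=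
    RingHom.ext hz.aevalEquivField_algebraMap_apply_coe
  have hP0 : Polynomial.aeval u P = 0 := by
    rw [Polynomial.aeval_def, Polynomial.eval₂_map, Polynomial.eval₂_map, hcomp,
      ← Polynomial.eval_map]
    exact hu
  refine ⟨⟨P, hP, hP0⟩, ?_⟩
  rw [← minpoly.eq_of_irreducible_of_monic hPirr hP0 hP, (hQ.map _).natDegree_map,
    hQ.natDegree_map]

theorem CharOK.isIntegral_and_natDegree_minpoly (h : CharOK K) {z : Fin 5 → E}
    (hz : AlgebraicIndependent K z) {u v w : E}
    (h16 : syzygy16.eval (normalisedValues z u v w) = 0)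
    (h17 : syzygy17.eval (normalisedValues z u v w) = 0)
    (h18 : syzygy18.eval (normalisedValues z u v w) = 0)
    (h19 : syzygy19.eval (normalisedValues z u v w) = 0) :
    IsIntegral (adjoin K (Set.range z)) u ∧
      (minpoly (adjoin K (Set.range z)) u).natDegree = 5 := by
  have hmap : (mulMatrix K (X : Fin 5 → MvPolynomial (Fin 5) K)).map
      (aeval z : _ →ₐ[K] E) = mulMatrix K z := by
    rw [mulMatrix_map]
    exact congrArg _ (funext fun i => aeval_X _ i)
  obtain ⟨hint, hdeg⟩ := isIntegral_and_natDegree_minpoly_of_irreducible hz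
    (Matrix.charpoly_monic _) h.irreducible_charpoly_mulMatrix (u := u) <| by
      rw [← Matrix.charpoly_map]
      exact hmap ▸ h.eval_charpoly_mulMatrix h16 h17 h18 h19
  exact ⟨hint, hdeg.trans (Matrix.charpoly_natDegree_eq_dim _)⟩

end Degree

section Rescaling

variable {K E : Type*} [Field K] [Field E] [Algebra K E]

/-- The integral invariant of weight `n` of the octavic rescaled so that `Z₃ = Z₂`. -/
def rescaledInvariant (a : ℕ → E) (n : ℕ) : E :=
  integralInvariant a n / (integralInvariant a 3 / integralInvariant a 2) ^ n

/-- The invariants `Z₂, Z₄, Z₅, Z₆, Z₇` of the octavic rescaled so that `Z₃ = Z₂`. -/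
def rescaledParameters (a : ℕ → E) (i : Fin 5) : E :=
  rescaledInvariant a (![2, 4, 5, 6, 7] i)

theorem eval_rescaledInvariant {T : SyzygyTable} {w : ℕ} (hT : T.IsIsobaric w) {a : ℕ → E}
    (h0 : T.eval (integralInvariant a) = 0) (h2 : integralInvariant a 2 ≠ 0)
    (h3 : integralInvariant a 3 ≠ 0) :
    T.eval (normalisedValues (rescaledParameters a) (rescaledInvariant a 8)
      (rescaledInvariant a 9) (rescaledInvariant a 10)) = 0 := by
  set θ := integralInvariant a 3 / integralInvariant a 2
  have hvalues (i : ℕ) (hi : i < 9) : normalisedValues (rescaledParameters a)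
      (rescaledInvariant a 8) (rescaledInvariant a 9) (rescaledInvariant a 10) (i + 2) =
        θ⁻¹ ^ (i + 2) * integralInvariant a (i + 2) := by
    have hr (n : ℕ) : rescaledInvariant a n = θ⁻¹ ^ n * integralInvariant a n := by
      rw [rescaledInvariant, inv_pow, div_eq_inv_mul]
    rw [← hr]
    interval_cases i <;> try rfl
    change rescaledInvariant a 2 = rescaledInvariant a 3
    rw [rescaledInvariant, rescaledInvariant]
    field_simp
  rw [← mul_zero (θ⁻¹ ^ w), ← h0, ← hT.eval_pow_mul, SyzygyTable.eval_eq_sum,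
    SyzygyTable.eval_eq_sum]
  refine congrArg List.sum (List.map_congr_left fun t _ => congrArg _ ?_)
  exact Finset.prod_congr rfl fun i hi => by rw [hvalues i (Finset.mem_range.1 hi)]

theorem algebraicIndependent_rescaledParameters {a : ℕ → E}
    (h : AlgebraicIndependent K fun i : Fin 6 => integralInvariant a (i + 2)) :
    AlgebraicIndependent K (rescaledParameters a) := by
  have hdiv := (algebraicIndependent_div_pow h zero_ne_one fun i => i + 2).comp
    (fun j : Fin 5 => ⟨Fin.succAbove 1 j, Fin.succAbove_ne 1 j⟩)
    fun i j hij => Fin.succAbove_right_injective (congrArg Subtype.val hij)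
  convert hdiv using 1
  funext i
  fin_cases i <;> rfl

theorem CharOK.of_algebra (h : CharOK K) (E : Type*) [Field E] [Algebra K E] : CharOK E := by
  unfold CharOK at *
  rwa [← Algebra.ringChar_eq K E]

theorem CharOK.isIntegral_and_natDegree_minpoly_rescaledInvariant (hK : CharOK K) {a : ℕ → E}
    (h : AlgebraicIndependent K fun i : Fin 6 => integralInvariant a (i + 2)) :
    IsIntegral (IntermediateField.adjoin K (Set.range (rescaledParameters a)))
        (rescaledInvariant a 8) ∧
      (minpoly (IntermediateField.adjoin K (Set.range (rescaledParameters a)))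
        (rescaledInvariant a 8)).natDegree = 5 := by
  have h2 : integralInvariant a 2 ≠ 0 := h.ne_zero 0
  have h3 : integralInvariant a 3 ≠ 0 := h.ne_zero 1
  exact hK.isIntegral_and_natDegree_minpoly (algebraicIndependent_rescaledParameters h)
    (eval_rescaledInvariant isIsobaric_syzygy16 (syzygy16_eval a) h2 h3)
    (eval_rescaledInvariant isIsobaric_syzygy17 (syzygy17_eval a) h2 h3)
    (eval_rescaledInvariant isIsobaric_syzygy18 (syzygy18_eval a) h2 h3)
    (eval_rescaledInvariant isIsobaric_syzygy19 (syzygy19_eval a) h2 h3)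

section Octavic

variable (h : CharOK E) (a : Fin 9 → E) (h2 : integralInvariant (coeffSeq a) 2 ≠ 0)
  (h3 : integralInvariant (coeffSeq a) 3 ≠ 0)
include h h2 h3

theorem CharOK.absoluteInvariants_rescaledParameters (h4 : integralInvariant (coeffSeq a) 4 ≠ 0)
    (h5 : integralInvariant (coeffSeq a) 5 ≠ 0) :
    ![J3 a ^ 2 / J2 a ^ 3, J4 a / J2 a ^ 2, J5 a / (J2 a * J3 a), J6 a / (J2 a * J4 a),
      J7 a / (J2 a * J5 a)] = absoluteInvariants (rescaledParameters (coeffSeq a)) := by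
  have hne (n : ℕ) (hn : n ∣ 210 ^ 12) : (n : E) ≠ 0 := h.natCast_ne_zero hn
  have c2 := hne 2 (by decide)
  have c4 := hne 4 (by decide)
  have c8 := hne 8 (by decide)
  have c24 := hne 24 (by decide)
  have c64 := hne 64 (by decide)
  have c72 := hne 72 (by decide)
  have c192 := hne 192 (by decide)
  have c1536 := hne 1536 (by decide)
  push_cast at c2 c4 c8 c24 c64 c72 c192 c1536
  let Z (n : ℕ) : E := integralInvariant (coeffSeq a) n
  change Z 2 ≠ 0 at h2
  change Z 3 ≠ 0 at h3
  change Z 4 ≠ 0 at h4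
  change Z 5 ≠ 0 at h5
  rw [h.J2_eq, h.J3_eq, h.J4_eq, h.J5_eq, h.J6_eq, h.J7_eq]
  funext i
  fin_cases i
  · change (Z 3 / 24) ^ 2 / (Z 2 / 2) ^ 3 = 1 / (72 * (Z 2 / (Z 3 / Z 2) ^ 2))
    field_simp
    ring
  · change Z 4 / 8 / (Z 2 / 2) ^ 2 = Z 4 / (Z 3 / Z 2) ^ 4 / (2 * (Z 2 / (Z 3 / Z 2) ^ 2) ^ 2)
    field_simp
    ring
  · change Z 5 / 192 / (Z 2 / 2 * (Z 3 / 24)) =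
      Z 5 / (Z 3 / Z 2) ^ 5 / (4 * (Z 2 / (Z 3 / Z 2) ^ 2) ^ 2)
    field_simp
    ring
  · change Z 6 / 64 / (Z 2 / 2 * (Z 4 / 8)) =
      Z 6 / (Z 3 / Z 2) ^ 6 / (4 * (Z 2 / (Z 3 / Z 2) ^ 2) * (Z 4 / (Z 3 / Z 2) ^ 4))
    field_simp
    ring
  · change Z 7 / 1536 / (Z 2 / 2 * (Z 5 / 192)) =
      Z 7 / (Z 3 / Z 2) ^ 7 / (4 * (Z 2 / (Z 3 / Z 2) ^ 2) * (Z 5 / (Z 3 / Z 2) ^ 5))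
    field_simp
    ring

theorem CharOK.J8_div_J2_pow_eq_smul :
    ∃ c : IntermediateField.adjoin K (Set.range (rescaledParameters (coeffSeq a))),
      c ≠ 0 ∧ J8 a / J2 a ^ 4 = c • rescaledInvariant (coeffSeq a) 8 := by
  have hne (n : ℕ) (hn : n ∣ 210 ^ 12) : (n : E) ≠ 0 := h.natCast_ne_zero hn
  have c192 := hne 192 (by decide)
  have c3072 := hne 3072 (by decide)
  push_cast at c192 c3072
  let z := rescaledParameters (coeffSeq a)
  have hz : z 0 ∈ IntermediateField.adjoin K (Set.range z) :=
    IntermediateField.subset_adjoin _ _ ⟨0, rfl⟩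
  have hz0 : z 0 ≠ 0 := div_ne_zero h2 (pow_ne_zero _ (div_ne_zero h3 h2))
  refine ⟨⟨1 / (192 * z 0 ^ 4),
    div_mem (one_mem _) (mul_mem (ofNat_mem _ 192) (pow_mem hz 4))⟩, fun hc => ?_, ?_⟩
  · exact one_div_ne_zero (mul_ne_zero c192 (pow_ne_zero 4 hz0)) (congrArg Subtype.val hc)
  · change J8 a / J2 a ^ 4 =
      1 / (192 * rescaledInvariant (coeffSeq a) 2 ^ 4) * rescaledInvariant (coeffSeq a) 8
    rw [h.J2_eq, h.J8_eq, rescaledInvariant, rescaledInvariant]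
    field_simp
    ring

end Octavic

section Degree

variable (hK : CharOK K) {a : Fin 9 → E}
  (hZ : AlgebraicIndependent K fun i : Fin 6 => integralInvariant (coeffSeq a) (i + 2))
include hK hZ

theorem CharOK.adjoin_range_absoluteInvariants_rescaledParameters :
    IntermediateField.adjoin K
        (Set.range (absoluteInvariants (rescaledParameters (coeffSeq a)))) =
      IntermediateField.adjoin K (Set.range (rescaledParameters (coeffSeq a))) :=
  (hK.of_algebra E).adjoin_range_absoluteInvariants
    (algebraicIndependent_rescaledParameters hZ).ne_zero

theorem CharOK.algebraicIndependent_absoluteInvariants :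
    AlgebraicIndependent K (absoluteInvariants (rescaledParameters (coeffSeq a))) :=
  have hz := algebraicIndependent_rescaledParameters hZ
  algebraicIndependent_of_forall_mem_adjoin hz
    ((hK.of_algebra E).mem_adjoin_absoluteInvariants hz.ne_zero)

theorem CharOK.isIntegral_and_natDegree_minpoly_J8_div_J2_pow :
    IsIntegral (IntermediateField.adjoin K
      (Set.range (absoluteInvariants (rescaledParameters (coeffSeq a))))) (J8 a / J2 a ^ 4) ∧
    (minpoly (IntermediateField.adjoin K
      (Set.range (absoluteInvariants (rescaledParameters (coeffSeq a)))))
        (J8 a / J2 a ^ 4)).natDegree = 5 := by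
  rw [hK.adjoin_range_absoluteInvariants_rescaledParameters hZ]
  obtain ⟨c, hc, heq⟩ := (hK.of_algebra E).J8_div_J2_pow_eq_smul (K := K) a (hZ.ne_zero 0)
    (hZ.ne_zero 1)
  obtain ⟨hint, hdeg⟩ := hK.isIntegral_and_natDegree_minpoly_rescaledInvariant hZ
  rw [heq, IsIntegrallyClosed.minpoly_smul hc hint, Polynomial.natDegree_scaleRoots]
  exact ⟨hint.smul c, hdeg⟩

end Degree

end Rescaling

section GenericOctavic

variable {K : Type*} [Field K]

theorem CharOK.algebraicIndependent_integralInvariant_genA (h : CharOK K) :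
    AlgebraicIndependent K fun i : Fin 6 =>
      integralInvariant (coeffSeq (genA K)) (i + 2) := by
  let φ := IsScalarTower.toAlgHom K (MvPolynomial (Fin 9) K) (FractionRing (MvPolynomial (Fin 9) K))
  have hφ (n : ℕ) : φ (integralInvariant (coeffSeq X) n) =
      integralInvariant (coeffSeq (genA K)) n := by
    refine (map_integralInvariant φ.toRingHom _ n).trans (congrArg (integralInvariant · n) ?_)
    funext i
    by_cases hi : i < 9
    · simp [coeffSeq, φ, hi, genA]
    · simp [coeffSeq, hi]
  have hmap := h.algebraicIndependent_integralInvariant.map' (f := φ) (IsFractionRing.injective _ _)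
  simpa only [Function.comp_def, hφ] using hmap

theorem absolute_invariants_trdeg_general (K : Type*) [Field K] (hK : CharOK K) :
    AlgebraicIndependent K ![T1 K, T2 K, T3 K, T4 K, T5 K] ∧
    IsAlgebraic (IntermediateField.adjoin K {T1 K, T2 K, T3 K, T4 K, T5 K}) (T6 K) ∧
    (minpoly (IntermediateField.adjoin K {T1 K, T2 K, T3 K, T4 K, T5 K}) (T6 K)).natDegree
      = 5 := by
  have hrange : ({T1 K, T2 K, T3 K, T4 K, T5 K} : Set (FractionRing (MvPolynomial (Fin 9) K))) =
      Set.range ![T1 K, T2 K, T3 K, T4 K, T5 K] := by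
    simp only [Matrix.range_cons, Matrix.range_empty, Set.union_empty, Set.singleton_union]
  have hZ := hK.algebraicIndependent_integralInvariant_genA
  have ht : ![T1 K, T2 K, T3 K, T4 K, T5 K] =
      absoluteInvariants (rescaledParameters (coeffSeq (genA K))) :=
    (hK.of_algebra _).absoluteInvariants_rescaledParameters _ (hZ.ne_zero 0) (hZ.ne_zero 1)
      (hZ.ne_zero 2) (hZ.ne_zero 3)
  rw [hrange, ht]
  obtain ⟨hint, hdeg⟩ := hK.isIntegral_and_natDegree_minpoly_J8_div_J2_pow hZ
  exact ⟨hK.algebraicIndependent_absoluteInvariants hZ, hint.isAlgebraic, hdeg⟩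

end GenericOctavic

/-- The field `k(t_1, ..., t_6)` has transcendence degree 5 over `k`: the absolute
invariants `t_1, ..., t_5` are algebraically independent over `k`, and `t_6` is algebraic
of degree exactly 5 over `k(t_1, ..., t_5)`. -/
theorem absolute_invariants_trdeg (K : Type*) [Field K] [IsAlgClosed K] (hK : CharOK K) :
    AlgebraicIndependent K ![T1 K, T2 K, T3 K, T4 K, T5 K] ∧
    IsAlgebraic (IntermediateField.adjoin K {T1 K, T2 K, T3 K, T4 K, T5 K}) (T6 K) ∧
    (minpoly (IntermediateField.adjoin K {T1 K, T2 K, T3 K, T4 K, T5 K}) (T6 K)).natDegree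
      = 5 :=
  absolute_invariants_trdeg_general K hK

end
end
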